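/- arXiv:2211.00507 — 2 statements merged into one kernel-verified Lean document; each statement's English description precedes it below -/
import Mathlib

section
/- Let H be a pointed Hopf algebra over an algebraically closed field K and let Q be the Ext-quiver of the category of right H-comodules. Suppose there is a finite subquiver Q′ ⊆ Q such that the finite-dimensional subcoalgebra KQ′₁ of H (spanned by the vertices and arrows of Q′) is of infinite corepresentation type. Then H is not of discrete corepresentation type. In particular, if Q′ is a bipartite quiver (every vertex a sink or a source) whose underlying graph is not a disjoint union of Dynkin diagrams, then H is not of discrete corepresentation type. -/
open TensorProduct



section Basic

variable (K : Type) [CommRing K] (H : Type) [AddCommGroup H] [Module K H] [Coalgebra K H]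

/-- A grouplike element of a coalgebra. -/
def IsGrouplike (g : H) : Prop :=
  Coalgebra.counit (R := K) g = 1 ∧ Coalgebra.comul (R := K) g = g ⊗ₜ[K] g

/-- The space `P(g,h)` of `(g,h)`-skew primitive elements. -/
noncomputable def skewPrim (g h : H) : Submodule K H :=
  LinearMap.ker (Coalgebra.comul (R := K) (A := H)
    - (TensorProduct.mk K H H g + (TensorProduct.mk K H H).flip h))

lemma mem_skewPrim {g h x : H} :
    x ∈ skewPrim K H g h ↔ Coalgebra.comul (R := K) x = g ⊗ₜ[K] x + x ⊗ₜ[K] h := by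
  rw [skewPrim, LinearMap.mem_ker, LinearMap.sub_apply, sub_eq_zero, LinearMap.add_apply]
  rfl

/-- A submodule which is a subcoalgebra. -/
def IsSubcoalgebra (D : Submodule K H) : Prop :=
  ∀ x ∈ D, Coalgebra.comul (R := K) x ∈ LinearMap.range (TensorProduct.map D.subtype D.subtype)

/-- A coalgebra is pointed if every simple subcoalgebra is one-dimensional. -/
def IsPointedCoalgebra : Prop :=
  ∀ D : Submodule K H, IsSubcoalgebra K H D → D ≠ ⊥ →
    (∀ D' : Submodule K H, IsSubcoalgebra K H D' → D' ≤ D → D' = ⊥ ∨ D' = D) →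
    Module.finrank K ↥D = 1

end Basic

section Comodules

variable (K : Type) [CommRing K] (H : Type) [AddCommGroup H] [Module K H] [Coalgebra K H]

/-- A (finite or infinite dimensional) right `H`-comodule. -/
structure Comod where
  carrier : Type
  [acg : AddCommGroup carrier]
  [mod : Module K carrier]
  ρ : carrier →ₗ[K] carrier ⊗[K] H
  counit_comp : ∀ m : carrier,
    (TensorProduct.rid K carrier)
      ((LinearMap.lTensor carrier (Coalgebra.counit (R := K) (A := H))) (ρ m)) = m
  coassoc : ∀ m : carrier,
    (LinearMap.lTensor carrier (Coalgebra.comul (R := K) (A := H))) (ρ m)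
      = (TensorProduct.assoc K carrier H H) ((LinearMap.rTensor H ρ) (ρ m))

attribute [instance] Comod.acg Comod.mod

/-- A morphism of right `H`-comodules. -/
structure ComodHom (M N : Comod K H) where
  toLin : M.carrier →ₗ[K] N.carrier
  compat : ∀ m : M.carrier, N.ρ (toLin m) = (LinearMap.rTensor H toLin) (M.ρ m)

/-- Isomorphism of comodules. -/
def ComodIso (M N : Comod K H) : Prop :=
  ∃ f : ComodHom K H M N, Function.Bijective f.toLin

/-- An indecomposable comodule: it is nonzero, and (equivalently to the usual definition,
since idempotents split in comodule categories) every idempotent endomorphism is `0` or `1`. -/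
def Comod.Indec (M : Comod K H) : Prop :=
  (∃ m : M.carrier, m ≠ 0) ∧
    ∀ f : ComodHom K H M M, f.toLin ∘ₗ f.toLin = f.toLin →
      f.toLin = 0 ∨ f.toLin = LinearMap.id

/-- A submodule of a comodule which is a subcomodule. -/
def IsSubcomod (M : Comod K H) (N : Submodule K M.carrier) : Prop :=
  ∀ m ∈ N, M.ρ m ∈ LinearMap.range (LinearMap.rTensor H N.subtype)

/-- The coaction of `M` factors through the subcoalgebra `D`, i.e. `M` is a `D`-comodule. -/
def CoactsThrough (M : Comod K H) (D : Submodule K H) : Prop :=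
  ∀ m : M.carrier, M.ρ m ∈ LinearMap.range (LinearMap.lTensor M.carrier D.subtype)

/-- `M` has dimension vector `d` : it admits a composition series whose successive quotients
are the one-dimensional comodules associated to grouplike elements, where for every `h` the
grouplike `h` occurs exactly `d h` times. -/
def HasDimVector (M : Comod K H) (d : H → ℕ) : Prop :=
  ∃ (k : ℕ) (F : Fin (k+1) → Submodule K M.carrier) (g : Fin k → H),
    F 0 = ⊥ ∧ F (Fin.last k) = ⊤ ∧
    (∀ i : Fin k, F i.castSucc ≤ F i.succ) ∧
    (∀ i : Fin (k+1), IsSubcomod K H M (F i)) ∧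
    (∀ i : Fin k, IsGrouplike K H (g i)) ∧
    (∀ i : Fin k, ∃ m : M.carrier, m ∈ F i.succ ∧ m ∉ F i.castSucc ∧
        F i.succ = F i.castSucc ⊔ Submodule.span K {m}) ∧
    (∀ i : Fin k, ∀ m ∈ F i.succ,
        M.ρ m - m ⊗ₜ[K] (g i) ∈ LinearMap.range (LinearMap.rTensor H (F i.castSucc).subtype)) ∧
    (∀ h : H, d h = Nat.card {i : Fin k // g i = h})

/-- A pointed coalgebra is of discrete corepresentation type if for every dimension vector `d`
there are only finitely many isomorphism classes of indecomposable comodules with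
dimension vector `d`. -/
def DiscreteCorepType : Prop :=
  ∀ d : H → ℕ, ∃ (N : ℕ) (R : Fin N → Comod K H),
    ∀ M : Comod K H, M.Indec K H → HasDimVector K H M d → ∃ i, ComodIso K H M (R i)

/-- A subcoalgebra `D ≤ H` is of finite corepresentation type: there are only finitely many
isomorphism classes of finite-dimensional indecomposable comodules whose coaction factors
through `D`. -/
def FinCorepTypeOn (D : Submodule K H) : Prop :=
  ∃ (N : ℕ) (R : Fin N → Comod K H),
    ∀ M : Comod K H, M.Indec K H → Module.Finite K M.carrier → CoactsThrough K H M D →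
      ∃ i, ComodIso K H M (R i)

/-- A coalgebra is of finite corepresentation type. -/
def FinCorepType : Prop := FinCorepTypeOn K H ⊤

end Comodules

/-!
Let `Q` be the subquiver, with arrows `e : s e → t e`. A comodule over `KQ₁` is a vector space with
complete orthogonal idempotents `p v` and operators `u e` that map the image of `p (t e)` to that of
`p (s e)` and compose to zero, and these are the representations of the separated quiver of `Q`, in
which every vertex is doubled.

Suppose that the coalgebra is of discrete type. Then there are finitely many indecomposable
representations of the separated quiver in each dimension, so by the Krull–Schmidt theorem finitely
many representations in each dimension. Comparing the number of parameters of the representations of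
dimension `d` with that of the group acting on them, whose scalars act trivially, shows that the
Tits form `q` satisfies `q d > 0`. As `q` is positive definite, Ringel's argument shows that
indecomposable representations have only scalar endomorphisms, whence `q d ≤ 1` for their
dimensions `d`. Only finitely many `d` satisfy this, hence `KQ₁` is of finite type. If `Q` is
bipartite, its Tits form is a restriction of `q` and so is positive definite too.
-/

section FiniteUpTo

variable {α β : Type*} {r : Setoid α}

/-- The elements satisfying `P` fall into finitely many classes of `r`, each of which has a
representative in `S`; the representatives need not satisfy `P`. -/
def FiniteUpTo (r : Setoid α) (P : α → Prop) : Prop :=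
  ∃ S : Set α, S.Finite ∧ ∀ a, P a → ∃ b ∈ S, r a b

namespace FiniteUpTo

lemma of_exists_mem {κ : Type*} {P : α → Prop} {Q : κ → α → Prop} {T : Set κ} (hT : T.Finite)
    (hQ : ∀ k ∈ T, FiniteUpTo r (Q k)) (hP : ∀ a, P a → ∃ k ∈ T, Q k a) : FiniteUpTo r P := by
  choose! S hS h using hQ
  refine ⟨⋃ k ∈ T, S k, hT.biUnion hS, fun a ha => ?_⟩
  obtain ⟨k, hk, hka⟩ := hP a ha
  obtain ⟨b, hb, hab⟩ := h k hk a hka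
  exact ⟨b, Set.mem_biUnion hk hb, hab⟩

lemma of_reflects {s : Setoid β} {P : α → Prop} {Q : β → Prop} (hQ : FiniteUpTo s Q) (f : α → β)
    (hPQ : ∀ a, P a → Q (f a)) (hf : ∀ a a', s (f a) (f a') → r a a') : FiniteUpTo r P := by
  obtain ⟨S, hS, h⟩ := hQ
  have hT : {b ∈ S | ∃ a, s (f a) b}.Finite := hS.subset (Set.sep_subset _ _)
  choose rep hrep using fun b : {b ∈ S | ∃ a, s (f a) b} => b.2.2
  have := hT.to_subtype
  refine ⟨Set.range rep, Set.finite_range rep, fun a ha => ?_⟩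
  obtain ⟨b, hb, hab⟩ := h (f a) (hPQ a ha)
  exact ⟨_, ⟨⟨b, hb, a, hab⟩, rfl⟩, hf _ _ (s.trans hab (s.symm (hrep _)))⟩

lemma exists_fin {P : α → Prop} (hP : FiniteUpTo r P) :
    ∃ (N : ℕ) (R : Fin N → α), ∀ a, P a → ∃ i, r a (R i) := by
  obtain ⟨S, hS, h⟩ := hP
  obtain ⟨N, R, -, rfl⟩ := hS.fin_param
  refine ⟨N, R, fun a ha => ?_⟩
  obtain ⟨-, ⟨i, rfl⟩, hai⟩ := h a ha
  exact ⟨i, hai⟩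

lemma of_fin {P : α → Prop} {N : ℕ} (R : Fin N → α) (hR : ∀ a, P a → ∃ i, r a (R i)) :
    FiniteUpTo r P :=
  ⟨Set.range R, Set.finite_range R, fun a ha =>
    let ⟨i, hi⟩ := hR a ha
    ⟨R i, ⟨i, rfl⟩, hi⟩⟩

end FiniteUpTo

end FiniteUpTo

section QuadraticForms

lemma finite_setOf_quadraticForm_le {M : Type*} [AddCommGroup M] [Module.Finite ℤ M]
    {Q : QuadraticForm ℤ M} (hQ : Q.PosDef) (c : ℤ) : {x | Q x ≤ c}.Finite := by
  -- Two vectors of the sublevel set congruent modulo `m` agree, as soon as `4 * c < m ^ 2`.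
  let m : ℤ := 2 * |c| + 1
  have hm : 4 * c < m * m := by
    have := le_abs_self c
    nlinarith [abs_nonneg c]
  let mM : Submodule ℤ M := LinearMap.range (LinearMap.lsmul ℤ M m)
  have htors : Module.IsTorsion ℤ (M ⧸ mM) := by
    intro q
    obtain ⟨x, rfl⟩ := mM.mkQ_surjective q
    refine ⟨⟨m, mem_nonZeroDivisors_of_ne_zero (by positivity)⟩, ?_⟩
    exact (Submodule.Quotient.mk_eq_zero mM).2 ⟨x, rfl⟩
  have := Module.finite_of_fg_torsion (M ⧸ mM) htors
  refine Set.Finite.of_finite_image (f := mM.mkQ) (Set.toFinite _) fun x hx y hy hxy => ?_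
  obtain ⟨z, hz : m • z = x - y⟩ := (Submodule.Quotient.eq mM).1 hxy
  have parallelogram : Q (x + y) + Q (x - y) = 2 * Q x + 2 * Q y := by
    have hadd := QuadraticMap.map_add Q x y
    have hsub := QuadraticMap.map_add Q x (-y)
    rw [QuadraticMap.polar_neg_right, QuadraticMap.map_neg, ← sub_eq_add_neg] at hsub
    linarith
  have hsum : 0 ≤ Q (x + y) := hQ.nonneg _
  have hxc : Q x ≤ c := hx
  have hyc : Q y ≤ c := hy
  rw [← hz, QuadraticMap.map_smul, smul_eq_mul] at parallelogram
  have hz0 : z = 0 := by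
    by_contra hne
    nlinarith [hQ z hne]
  rwa [hz0, smul_zero, eq_comm, sub_eq_zero] at hz

variable {V W A : Type*} [Fintype V] [Fintype W] [Fintype A]

/-- The Tits form `∑ w, d w ^ 2 - ∑ e, d (src e) * d (tgt e)` of the quiver with vertices `W` and
arrows `e : src e → tgt e`. -/
def titsForm (src tgt : A → W) : QuadraticForm ℤ (W → ℤ) :=
  ∑ w, QuadraticMap.proj w w - ∑ e, QuadraticMap.proj (src e) (tgt e)

lemma titsForm_apply (src tgt : A → W) (d : W → ℤ) :
    titsForm src tgt d = ∑ w, d w ^ 2 - ∑ e, d (src e) * d (tgt e) := by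
  simp only [titsForm, sub_apply, sum_apply, QuadraticMap.proj_apply,
    sq]

lemma titsForm_posDef_of_nat {src tgt : A → W}
    (h : ∀ d : W → ℕ, d ≠ 0 → 0 < titsForm src tgt fun w => (d w : ℤ)) :
    (titsForm src tgt).PosDef := by
  intro d hd
  have habs := h (fun w => (d w).natAbs) fun h0 =>
    hd (funext fun w => Int.natAbs_eq_zero.1 (congrFun h0 w))
  simp only [titsForm_apply, Int.natCast_natAbs, sq_abs, ← abs_mul] at habs ⊢
  have : ∑ e, d (src e) * d (tgt e) ≤ ∑ e, |d (src e) * d (tgt e)| :=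
    Finset.sum_le_sum fun e _ => le_abs_self _
  linarith

variable (s t : A → V)

/-- The Tits form of the separated quiver of `s, t : A → V`: each vertex `v` is doubled to
`inl v` and `inr v`, and each arrow `e : s e → t e` becomes an arrow `inr (t e) → inl (s e)`. -/
abbrev separatedTitsForm : QuadraticForm ℤ (V ⊕ V → ℤ) :=
  titsForm (fun e => Sum.inr (t e)) (fun e => Sum.inl (s e))

variable {s t}

lemma titsForm_posDef_of_bipartite (hst : ∀ v, (∀ e, s e ≠ v) ∨ (∀ e, t e ≠ v))
    (h : (separatedTitsForm s t).PosDef) : (titsForm s t).PosDef := by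
  classical
  intro d hd
  -- In a bipartite quiver every vertex is an end of arrows on only one side of the separation.
  let d' : V ⊕ V → ℤ :=
    Sum.elim (fun v => if ∃ e, t e = v then 0 else d v) (fun v => if ∃ e, t e = v then d v else 0)
  have hd' : d' ≠ 0 := by
    contrapose! hd
    funext v
    have hl := congrFun hd (Sum.inl v)
    have hr := congrFun hd (Sum.inr v)
    by_cases hv : ∃ e, t e = v
    · simpa [d', hv] using hr
    · simpa [d', hv] using hl
  have htgt : ∀ e, d' (Sum.inr (t e)) = d (t e) := fun e => if_pos ⟨e, rfl⟩
  have hsrc : ∀ e, d' (Sum.inl (s e)) = d (s e) := fun e =>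
    if_neg fun ⟨e', he'⟩ => ((hst (s e)).resolve_left fun hs => hs e rfl) e' he'
  have hsq : ∀ v, d' (Sum.inl v) ^ 2 + d' (Sum.inr v) ^ 2 = d v ^ 2 := by
    intro v
    by_cases hv : ∃ e, t e = v <;> simp [d', hv]
  calc 0 < separatedTitsForm s t d' := h d' hd'
    _ = titsForm s t d := by
      simp only [titsForm_apply, Fintype.sum_sum_type, ← Finset.sum_add_distrib, hsq, htgt, hsrc,
        mul_comm]

end QuadraticForms

section ParameterCount

lemma exists_aeval_eq_zero_of_card_lt {K : Type*} [Field K] {σ τ : Type*} [Fintype σ] [Fintype τ]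
    (h : Fintype.card σ < Fintype.card τ) (F : τ → MvPolynomial σ K) :
    ∃ G : MvPolynomial τ K, G ≠ 0 ∧ MvPolynomial.aeval F G = 0 := by
  have hF : ¬ AlgebraicIndependent K F := by
    intro hF
    have hle := hF.lift_cardinalMk_le_trdeg
    rw [MvPolynomial.trdeg_of_isDomain] at hle
    simp only [Cardinal.mk_fintype, Cardinal.lift_natCast, Nat.cast_le] at hle
    omega
  simpa only [algebraicIndependent_iff, not_forall, exists_prop, and_comm] using hF

lemma exists_forall_ne_eval_of_card_lt {K : Type*} [Field K] [Infinite K] {τ ι : Type*} [Fintype τ]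
    [Finite ι] {σ : ι → Type*} [∀ i, Fintype (σ i)]
    (hcard : ∀ i, Fintype.card (σ i) < Fintype.card τ) (F : ∀ i, τ → MvPolynomial (σ i) K)
    {q : MvPolynomial τ K} (hq : q ≠ 0) :
    ∃ y, MvPolynomial.eval y q ≠ 0 ∧ ∀ i z, y ≠ fun x => MvPolynomial.eval z (F i x) := by
  cases nonempty_fintype ι
  choose G hG hFG using fun i => exists_aeval_eq_zero_of_card_lt (hcard i) (F i)
  have hqG : q * ∏ i, G i ≠ 0 := mul_ne_zero hq (Finset.prod_ne_zero_iff.2 fun i _ => hG i)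
  obtain ⟨y, hy⟩ : ∃ y, MvPolynomial.eval y (q * ∏ i, G i) ≠ 0 := by
    contrapose! hqG
    exact MvPolynomial.funext fun y => (hqG y).trans (map_zero _).symm
  rw [map_mul, map_prod, mul_ne_zero_iff, Finset.prod_ne_zero_iff] at hy
  refine ⟨y, hy.1, fun i z hyz => hy.2 i (Finset.mem_univ i) ?_⟩
  calc MvPolynomial.eval y (G i)
      = MvPolynomial.aeval z (MvPolynomial.aeval (F i) (G i)) := by
        rw [MvPolynomial.comp_aeval_apply, hyz]
        simp only [← MvPolynomial.coe_aeval_eq_eval]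
        rfl
    _ = 0 := by rw [hFG, map_zero]

variable {K L R A : Type*} [Field K] {I : L → Type*} {J : R → Type*}

/-- The positions in two families of square matrices indexed by `I` and `J`, except for the
position `x₀` of the first family, whose entry is normalized to `1`. -/
abbrev FreePosition (J : R → Type*) (x₀ : Σ l, I l × I l) :=
  {x : Σ l, I l × I l // x ≠ x₀} ⊕ Σ r, J r × J r

/-- The values at the free positions of two families of square matrices. -/
def freeEntries (Z : ∀ l, Matrix (I l) (I l) K) (Z' : ∀ r, Matrix (J r) (J r) K)
    (x₀ : Σ l, I l × I l) : FreePosition J x₀ → K :=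
  Sum.elim (fun x => Z x.1.1 x.1.2.1 x.1.2.2) fun x => Z' x.1 x.2.1 x.2.2

variable (K J) in
open Classical in
/-- The first family of square matrices, with indeterminates at its free positions. -/
noncomputable def leftGenericMatrix (x₀ : Σ l, I l × I l) (l : L) :
    Matrix (I l) (I l) (MvPolynomial (FreePosition J x₀) K) :=
  Matrix.of fun i i' =>
    if h : ⟨l, i, i'⟩ = x₀ then 1 else MvPolynomial.X (Sum.inl ⟨⟨l, i, i'⟩, h⟩)

variable (K J) in
/-- The second family of square matrices, with indeterminates at all positions. -/
noncomputable def rightGenericMatrix (x₀ : Σ l, I l × I l) (r : R) :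
    Matrix (J r) (J r) (MvPolynomial (FreePosition J x₀) K) :=
  Matrix.of fun j j' => MvPolynomial.X (Sum.inr ⟨r, j, j'⟩)

lemma leftGenericMatrix_map_eval {x₀ : Σ l, I l × I l} {Z : ∀ l, Matrix (I l) (I l) K}
    (hZ : Z x₀.1 x₀.2.1 x₀.2.2 = 1) (Z' : ∀ r, Matrix (J r) (J r) K) (l : L) :
    (leftGenericMatrix K J x₀ l).map (MvPolynomial.eval (freeEntries Z Z' x₀)) = Z l := by
  ext i i'
  by_cases h : ⟨l, i, i'⟩ = x₀
  · subst h
    simp [leftGenericMatrix, hZ]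
  · simp [leftGenericMatrix, h, freeEntries]

lemma rightGenericMatrix_map_eval (Z : ∀ l, Matrix (I l) (I l) K) (Z' : ∀ r, Matrix (J r) (J r) K)
    (x₀ : Σ l, I l × I l) (r : R) :
    (rightGenericMatrix K J x₀ r).map (MvPolynomial.eval (freeEntries Z Z' x₀)) = Z' r := by
  ext j j'
  simp [rightGenericMatrix, freeEntries]

variable [∀ l, Fintype (I l)] [∀ r, Fintype (J r)] (s : A → L) (t : A → R)

/-- The entries of `Z (s e) * φ e * Z' (t e)`, as polynomials in the free entries of `Z`
and `Z'`. -/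
noncomputable def orbitPolynomial (φ : ∀ e, Matrix (I (s e)) (J (t e)) K) (x₀ : Σ l, I l × I l)
    (y : Σ e, I (s e) × J (t e)) : MvPolynomial (FreePosition J x₀) K :=
  (leftGenericMatrix K J x₀ (s y.1) *
    (φ y.1).map (MvPolynomial.C (σ := FreePosition J x₀)) *
      rightGenericMatrix K J x₀ (t y.1)) y.2.1 y.2.2

lemma eval_orbitPolynomial (φ : ∀ e, Matrix (I (s e)) (J (t e)) K) {x₀ : Σ l, I l × I l}
    {Z : ∀ l, Matrix (I l) (I l) K} (hZ : Z x₀.1 x₀.2.1 x₀.2.2 = 1)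
    (Z' : ∀ r, Matrix (J r) (J r) K) (y : Σ e, I (s e) × J (t e)) :
    MvPolynomial.eval (freeEntries Z Z' x₀) (orbitPolynomial s t φ x₀ y) =
      (Z (s y.1) * φ y.1 * Z' (t y.1)) y.2.1 y.2.2 := by
  have hC : MvPolynomial.eval (freeEntries Z Z' x₀) ∘ MvPolynomial.C = id :=
    funext fun a => MvPolynomial.eval_C a
  rw [orbitPolynomial, ← Matrix.map_apply (f := MvPolynomial.eval _), Matrix.map_mul,
    Matrix.map_mul, leftGenericMatrix_map_eval hZ, rightGenericMatrix_map_eval, Matrix.map_map,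
    hC, Matrix.map_id]

variable {s t} [Fintype L] [Fintype R] [Fintype A]

lemma sum_card_mul_card_lt_of_finite_orbits [Infinite K]
    (hpos : 0 < ∑ l, Fintype.card (I l) ^ 2 + ∑ r, Fintype.card (J r) ^ 2)
    {Φ : Set (∀ e, Matrix (I (s e)) (J (t e)) K)} (hΦ : Φ.Finite)
    (hcover : ∀ φ' : ∀ e, Matrix (I (s e)) (J (t e)) K, ∃ φ ∈ Φ,
      ∃ (Z : ∀ l, Matrix (I l) (I l) K) (Z' : ∀ r, Matrix (J r) (J r) K),
        ∀ e, φ' e = Z (s e) * φ e * Z' (t e)) :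
    ∑ e, Fintype.card (I (s e)) * Fintype.card (J (t e)) <
      ∑ l, Fintype.card (I l) ^ 2 + ∑ r, Fintype.card (J r) ^ 2 := by
  classical
  by_contra! hle
  have hcard : Fintype.card (Σ e, I (s e) × J (t e)) =
      ∑ e, Fintype.card (I (s e)) * Fintype.card (J (t e)) := by
    simp only [Fintype.card_sigma, Fintype.card_prod]
  obtain ⟨e₀, i₀, j₀⟩ : Nonempty (Σ e, I (s e) × J (t e)) :=
    Fintype.card_pos_iff.1 (by omega)
  have hlt (x₀ : Σ l, I l × I l) :
      Fintype.card (FreePosition J x₀) <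
        Fintype.card (Σ e, I (s e) × J (t e)) := by
    have hx₀ : Fintype.card {x : Σ l, I l × I l // x ≠ x₀} < ∑ l, Fintype.card (I l) ^ 2 := by
      simpa only [Fintype.card_sigma, Fintype.card_prod, ← sq] using
        Fintype.card_subtype_lt (p := (· ≠ x₀)) (x := x₀) (not_not.2 rfl)
    rw [hcard, Fintype.card_sum, Fintype.card_sigma (α := fun r => J r × J r)]
    simp only [Fintype.card_prod, ← sq]
    omega
  have := hΦ.fintype
  obtain ⟨y, hy₀, hy⟩ := exists_forall_ne_eval_of_card_lt (K := K)
    (fun p : Φ × Σ l, I l × I l => hlt p.2) (fun p => orbitPolynomial s t p.1.1 p.2)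
    (MvPolynomial.X_ne_zero (⟨e₀, i₀, j₀⟩ : Σ e, I (s e) × J (t e)))
  obtain ⟨φ, hφ, Z, Z', hZ⟩ := hcover fun e => Matrix.of fun i j => y ⟨e, i, j⟩
  obtain ⟨x₀, hx₀⟩ : ∃ x₀ : Σ l, I l × I l, Z x₀.1 x₀.2.1 x₀.2.2 ≠ 0 := by
    by_contra! hZ0
    have hZs : Z (s e₀) = 0 := Matrix.ext fun i i' => hZ0 ⟨s e₀, i, i'⟩
    apply hy₀
    simpa [hZs] using congrFun (congrFun (hZ e₀) i₀) j₀
  -- Scaling `Z` by `c⁻¹` and `Z'` by `c` changes nothing, which saves one parameter.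
  let c := Z x₀.1 x₀.2.1 x₀.2.2
  refine hy ⟨⟨φ, hφ⟩, x₀⟩ (freeEntries (c⁻¹ • Z) (c • Z') x₀) (funext fun ⟨e, i, j⟩ => ?_)
  rw [eval_orbitPolynomial s t φ (inv_mul_cancel₀ hx₀), Pi.smul_apply, Pi.smul_apply,
    Matrix.smul_mul, Matrix.smul_mul, Matrix.mul_smul, inv_smul_smul₀ hx₀, ← hZ, Matrix.of_apply]

end ParameterCount

section TrivialIdempotents

open Polynomial in
lemma isUnit_or_isNilpotent_of_forall_isIdempotentElem {K R : Type*} [Field K] [Ring R]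
    [Algebra K R] [Algebra.IsIntegral K R] (h : ∀ e : R, IsIdempotentElem e → e = 0 ∨ e = 1)
    (a : R) : IsUnit a ∨ IsNilpotent a := by
  obtain ⟨r, hr, hXr⟩ := exists_eq_pow_rootMultiplicity_mul_and_not_dvd (minpoly K a)
    (minpoly.ne_zero (Algebra.IsIntegral.isIntegral a)) 0
  set k := rootMultiplicity 0 (minpoly K a)
  rw [map_zero, sub_zero] at hr hXr
  obtain ⟨u, v, huv⟩ : IsCoprime (X ^ (k + 1)) r :=
    IsCoprime.pow_left (irreducible_X.coprime_iff_not_dvd.2 hXr)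
  have hXkr : aeval a (X ^ (k + 1) * r) = 0 := by
    rw [pow_succ', mul_assoc, ← hr, map_mul, minpoly.aeval, mul_zero]
  have huv_aeval : aeval a (u * X ^ (k + 1)) + aeval a (v * r) = 1 := by
    rw [← map_add, huv, map_one]
  -- The minimal polynomial is `X ^ k * r`, and `u * X ^ (k + 1)` is the idempotent of the
  -- Chinese remainder theorem, congruent to `0` modulo `X ^ k` and to `1` modulo `r`.
  have hidem : IsIdempotentElem (aeval a (u * X ^ (k + 1))) := by
    have hmul : u * X ^ (k + 1) * (u * X ^ (k + 1)) =
        u * X ^ (k + 1) - u * v * (X ^ (k + 1) * r) := by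
      linear_combination (u * X ^ (k + 1)) * huv
    rw [IsIdempotentElem, ← map_mul, hmul, map_sub, map_mul _ (u * v), hXkr, mul_zero, sub_zero]
  rcases h _ hidem with h0 | h1
  · right
    refine ⟨k + 1, ?_⟩
    rw [h0, zero_add] at huv_aeval
    calc a ^ (k + 1) = aeval a ((X : K[X]) ^ (k + 1)) * aeval a (v * r) := by
          rw [huv_aeval, mul_one, map_pow, aeval_X]
      _ = aeval a (v * (X ^ (k + 1) * r)) := by rw [← map_mul, mul_left_comm]
      _ = 0 := by rw [map_mul, hXkr, mul_zero]
  · left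
    have hleft : aeval a (u * X ^ k) * a = 1 := by
      rw [← h1, pow_succ, ← mul_assoc, map_mul _ (u * X ^ k) X, aeval_X]
    have hcomm : a * aeval a (u * X ^ k) = aeval a (u * X ^ k) * a := by
      simpa only [aeval_X] using ((Commute.all (X : K[X]) (u * X ^ k)).map (aeval a)).eq
    exact ⟨⟨a, _, hcomm.trans hleft, hleft⟩, rfl⟩

lemma exists_ne_zero_sq_eq_zero_of_bot_ne_top {K R : Type*} [Field K] [IsAlgClosed K] [Ring R]
    [Algebra K R] [FiniteDimensional K R] (h : ∀ e : R, IsIdempotentElem e → e = 0 ∨ e = 1)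
    (hR : (⊥ : Subalgebra K R) ≠ ⊤) : ∃ a : R, a ≠ 0 ∧ a ^ 2 = 0 := by
  by_contra! hsq
  have : IsReduced R := (isReduced_iff_pow_one_lt 2 one_lt_two).2 fun a ha => by_contra (hsq a · ha)
  have : Nontrivial R := not_subsingleton_iff_nontrivial.1 fun _ => hR (Subsingleton.elim _ _)
  refine hR (eq_top_iff.2 fun a _ => ?_)
  obtain ⟨c, hc⟩ := spectrum.nonempty_of_isAlgClosed_of_finiteDimensional K a
  have hnil : IsNilpotent (algebraMap K R c - a) :=
    (isUnit_or_isNilpotent_of_forall_isIdempotentElem (K := K) h _).resolve_left hc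
  exact Algebra.mem_bot.2 ⟨c, sub_eq_zero.1 hnil.eq_zero⟩

end TrivialIdempotents

section QuiverReps

lemma exists_comp_eq_of_ker_le_ker {K V V' V'' : Type*} [Field K] [AddCommGroup V]
    [AddCommGroup V'] [AddCommGroup V''] [Module K V] [Module K V'] [Module K V'']
    {f : V →ₗ[K] V'} {g : V →ₗ[K] V''} (h : LinearMap.ker f ≤ LinearMap.ker g) :
    ∃ k : V' →ₗ[K] V'', k ∘ₗ f = g := by
  obtain ⟨k, hk⟩ := LinearMap.exists_extend
    ((LinearMap.ker f).liftQ g h ∘ₗ f.quotKerEquivRange.symm.toLinearMap)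
  refine ⟨k, LinearMap.ext fun x => ?_⟩
  have hsymm : f.quotKerEquivRange.symm (f.rangeRestrict x) = (LinearMap.ker f).mkQ x :=
    f.quotKerEquivRange_symm_apply_image x ⟨x, rfl⟩
  have hx := LinearMap.congr_fun hk (f.rangeRestrict x)
  rwa [LinearMap.comp_apply, LinearMap.comp_apply, LinearEquiv.coe_coe, hsymm] at hx

/-- The representations, on the vector spaces `X w`, of the quiver with vertices `W` and arrows
`e : src e → tgt e`. -/
abbrev QuiverRep (K : Type*) [Semiring K] {W A : Type*} (src tgt : A → W) (X : W → Type*)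
    [∀ w, AddCommMonoid (X w)] [∀ w, Module K (X w)] :=
  ∀ e, X (src e) →ₗ[K] X (tgt e)

namespace QuiverRep

variable {K W A : Type*} [Field K] {src tgt : A → W}
  {X Y Z : W → Type*} [∀ w, AddCommGroup (X w)] [∀ w, Module K (X w)]
  [∀ w, AddCommGroup (Y w)] [∀ w, Module K (Y w)] [∀ w, AddCommGroup (Z w)] [∀ w, Module K (Z w)]

/-- The families of linear maps that are morphisms of representations. -/
def IsHom (φ : QuiverRep K src tgt X) (χ : QuiverRep K src tgt Y) (f : ∀ w, X w →ₗ[K] Y w) : Prop :=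
  ∀ e x, χ e (f (src e) x) = f (tgt e) (φ e x)

lemma IsHom.comp {φ : QuiverRep K src tgt X} {χ : QuiverRep K src tgt Y}
    {ω : QuiverRep K src tgt Z} {g : ∀ w, Y w →ₗ[K] Z w} {f : ∀ w, X w →ₗ[K] Y w}
    (hg : IsHom χ ω g) (hf : IsHom φ χ f) : IsHom φ ω fun w => g w ∘ₗ f w := fun e x => by
  rw [LinearMap.comp_apply, hg, hf, LinearMap.comp_apply]

/-- The endomorphism algebra of a representation. -/
def endAlgebra (φ : QuiverRep K src tgt X) : Subalgebra K (∀ w, Module.End K (X w)) where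
  carrier := {f | IsHom φ φ f}
  mul_mem' hf hg := IsHom.comp hf hg
  add_mem' {f g} hf hg e x := by
    simp only [Pi.add_apply, LinearMap.add_apply, map_add, hf e x, hg e x]
  algebraMap_mem' c e x := by
    simp only [Pi.algebraMap_apply, Module.algebraMap_end_apply, map_smul]

/-- The nonzero representations without nontrivial idempotent endomorphisms. -/
def IsIndecomposable (φ : QuiverRep K src tgt X) : Prop :=
  (∃ w, Nontrivial (X w)) ∧ ∀ f ∈ φ.endAlgebra, IsIdempotentElem f → f = 0 ∨ f = 1

/-- The representations all of whose endomorphisms are scalars. -/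
def IsBrick (φ : QuiverRep K src tgt X) : Prop :=
  φ.endAlgebra = ⊥

/-- The map `f ↦ φ ∘ f - f ∘ φ`, whose kernel is `End φ` and whose cokernel is `Ext¹(φ, φ)`. -/
def commutator (φ : QuiverRep K src tgt X) :
    (∀ w, Module.End K (X w)) →ₗ[K] ∀ e, X (src e) →ₗ[K] X (tgt e) where
  toFun f e := φ e ∘ₗ f (src e) - f (tgt e) ∘ₗ φ e
  map_add' f g := by
    ext e x
    simp only [Pi.add_apply, LinearMap.sub_apply, LinearMap.comp_apply, LinearMap.add_apply,
      map_add]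
    abel
  map_smul' c f := by
    ext e x
    simp only [Pi.smul_apply, LinearMap.sub_apply, LinearMap.comp_apply, LinearMap.smul_apply,
      map_smul, smul_sub, RingHom.id_apply]

lemma ker_commutator (φ : QuiverRep K src tgt X) :
    LinearMap.ker φ.commutator = Subalgebra.toSubmodule φ.endAlgebra := by
  ext f
  simp only [LinearMap.mem_ker, Subalgebra.mem_toSubmodule, funext_iff, LinearMap.ext_iff]
  exact forall₂_congr fun e x => sub_eq_zero

lemma IsBrick.finrank_endAlgebra_le {φ : QuiverRep K src tgt X} (hφ : φ.IsBrick) :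
    Module.finrank K φ.endAlgebra ≤ 1 := by
  rw [hφ]
  exact finrank_le_one 1 fun a => (Algebra.mem_bot.1 a.2).imp fun c hc =>
    Subtype.ext ((Algebra.algebraMap_eq_smul_one c).symm.trans hc)

section TitsForm

variable (K X) in
/-- The dimension vector of a representation on the spaces `X w`. -/
noncomputable def dimVector (w : W) : ℤ :=
  Module.finrank K (X w)

lemma dimVector_ne_zero [∀ w, Module.Finite K (X w)] (h : ∃ w, Nontrivial (X w)) :
    dimVector K X ≠ 0 := by
  obtain ⟨w, hw⟩ := h
  exact fun h0 => Module.finrank_pos.ne' (Nat.cast_eq_zero.1 (congrFun h0 w))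

variable [Fintype W] [Fintype A] [∀ w, Module.Finite K (X w)]

lemma finrank_endAlgebra_eq (φ : QuiverRep K src tgt X) :
    (Module.finrank K φ.endAlgebra : ℤ) = titsForm src tgt (dimVector K X) +
      Module.finrank K ((∀ e, X (src e) →ₗ[K] X (tgt e)) ⧸ LinearMap.range φ.commutator) := by
  have hker := LinearMap.finrank_range_add_finrank_ker φ.commutator
  have hcoker := Submodule.finrank_quotient_add_finrank (LinearMap.range φ.commutator)
  rw [ker_commutator, Module.finrank_pi_fintype] at hker
  rw [Module.finrank_pi_fintype] at hcoker
  simp only [Module.finrank_linearMap] at hker hcoker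
  zify at hker hcoker
  simp only [titsForm_apply, dimVector, sq]
  linarith [Subalgebra.finrank_toSubmodule φ.endAlgebra]

lemma IsBrick.titsForm_le_one {φ : QuiverRep K src tgt X} (hφ : φ.IsBrick) :
    titsForm src tgt (dimVector K X) ≤ 1 := by
  have := φ.finrank_endAlgebra_eq
  have := hφ.finrank_endAlgebra_le
  omega

lemma IsBrick.commutator_surjective {φ : QuiverRep K src tgt X} (hφ : φ.IsBrick)
    (hpos : (titsForm src tgt).PosDef) (hX : ∃ w, Nontrivial (X w)) :
    Function.Surjective φ.commutator := by
  have heuler := φ.finrank_endAlgebra_eq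
  have hle := hφ.finrank_endAlgebra_le
  have hlt := hpos _ (dimVector_ne_zero (K := K) hX)
  have hcoker : Module.finrank K
      ((∀ e, X (src e) →ₗ[K] X (tgt e)) ⧸ LinearMap.range φ.commutator) = 0 := by omega
  exact LinearMap.range_eq_top.1
    (Submodule.Quotient.subsingleton_iff.1 (Module.finrank_zero_iff.1 hcoker))

end TitsForm

section Summands

/-- The restriction of a representation to a stable family of subspaces. -/
def restrict (φ : QuiverRep K src tgt X) (N : ∀ w, Submodule K (X w))
    (hN : ∀ e, ∀ x ∈ N (src e), φ e x ∈ N (tgt e)) : QuiverRep K src tgt fun w => N w :=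
  fun e => (φ e).restrict (hN e)

/-- The image of an endomorphism of a representation. -/
def image {φ : QuiverRep K src tgt X} {p : ∀ w, Module.End K (X w)} (hp : p ∈ φ.endAlgebra) :
    QuiverRep K src tgt fun w => LinearMap.range (p w) :=
  φ.restrict (fun w => LinearMap.range (p w)) <| by
    rintro e _ ⟨x, rfl⟩
    exact ⟨φ e x, (hp e x).symm⟩

/-- The kernel of an endomorphism of a representation. -/
def kernel {φ : QuiverRep K src tgt X} {θ : ∀ w, Module.End K (X w)} (hθ : θ ∈ φ.endAlgebra) :
    QuiverRep K src tgt fun w => LinearMap.ker (θ w) :=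
  φ.restrict (fun w => LinearMap.ker (θ w)) fun e x hx => by
    rw [LinearMap.mem_ker, ← hθ e x, LinearMap.mem_ker.1 hx, map_zero]

lemma isHom_rangeRestrict {φ : QuiverRep K src tgt X} {p : ∀ w, Module.End K (X w)}
    (hp : p ∈ φ.endAlgebra) : IsHom φ (image hp) fun w => (p w).rangeRestrict :=
  fun e x => Subtype.ext (hp e x)

lemma isHom_subtype {φ : QuiverRep K src tgt X} {N : ∀ w, Submodule K (X w)}
    (hN : ∀ e, ∀ x ∈ N (src e), φ e x ∈ N (tgt e)) :
    IsHom (φ.restrict N hN) φ fun w => (N w).subtype :=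
  fun _ _ => rfl

lemma rangeRestrict_apply_of_isIdempotentElem {p : ∀ w, Module.End K (X w)}
    (hp : IsIdempotentElem p) {w : W} (y : LinearMap.range (p w)) :
    (p w).rangeRestrict y = y := by
  obtain ⟨_, z, rfl⟩ := y
  exact Subtype.ext (LinearMap.congr_fun (congrFun hp w) z)

lemma exists_isIndecomposable_image [Finite W] [∀ w, Module.Finite K (X w)]
    (φ : QuiverRep K src tgt X) {w₀ : W} {x₀ : X w₀} (hx₀ : x₀ ≠ 0) :
    ∃ (p : ∀ w, Module.End K (X w)) (hp : p ∈ φ.endAlgebra), IsIdempotentElem p ∧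
      p w₀ x₀ ≠ 0 ∧ (image hp).IsIndecomposable := by
  have : WellFoundedLT (∀ w, Submodule K (X w)) := Pi.wellFoundedLT
  obtain ⟨p, ⟨hp, hpp, hpx⟩, hmin⟩ := exists_minimalFor_of_wellFoundedLT
    (fun p => p ∈ φ.endAlgebra ∧ IsIdempotentElem p ∧ p w₀ x₀ ≠ 0)
    (fun p w => LinearMap.range (p w)) ⟨1, one_mem _, .one, hx₀⟩
  let y₀ : LinearMap.range (p w₀) := (p w₀).rangeRestrict x₀
  have hy₀ : y₀ ≠ 0 := fun h => hpx (congrArg Subtype.val h)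
  have eq_one : ∀ f ∈ (image hp).endAlgebra, IsIdempotentElem f → f w₀ y₀ ≠ 0 → f = 1 := by
    intro f hf hff hfy
    let p' : ∀ w, Module.End K (X w) := fun w =>
      (LinearMap.range (p w)).subtype ∘ₗ f w ∘ₗ (p w).rangeRestrict
    have hp' : p' ∈ φ.endAlgebra :=
      IsHom.comp (isHom_subtype _) (IsHom.comp (χ := image hp) hf (isHom_rangeRestrict hp))
    have hff' (w) (y : LinearMap.range (p w)) : f w (f w y) = f w y :=
      LinearMap.congr_fun (congrFun hff w) y
    have hpp' : IsIdempotentElem p' := funext fun w => LinearMap.ext fun x =>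
      congrArg Subtype.val <|
      (congrArg (f w) (rangeRestrict_apply_of_isIdempotentElem hpp _)).trans (hff' w _)
    have hle := hmin ⟨hp', hpp', fun h => hfy (Subtype.ext h)⟩ fun w => by
      rintro _ ⟨x, rfl⟩
      exact (f w _).2
    funext w
    ext y : 1
    obtain ⟨x, hx⟩ := hle w y.2
    obtain rfl : f w ((p w).rangeRestrict x) = y := Subtype.ext hx
    exact hff' w _
  refine ⟨p, hp, hpp, hpx, ⟨w₀, nontrivial_of_ne _ _ hy₀⟩, fun f hf hff => ?_⟩
  by_cases hfy : f w₀ y₀ = 0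
  · refine .inl (sub_eq_self.1 (eq_one (1 - f) (sub_mem (one_mem _) hf) hff.one_sub ?_))
    rwa [Pi.sub_apply, LinearMap.sub_apply, hfy, sub_zero]
  · exact .inr (eq_one f hf hff hfy)

end Summands

section Bricks

lemma exists_isHom_eqOn_ker {φ : QuiverRep K src tgt X} {χ : QuiverRep K src tgt Y}
    (hχ : Function.Surjective χ.commutator) {γ : ∀ w, X w →ₗ[K] Y w} (hγ : IsHom φ χ γ)
    (π : ∀ w, X w →ₗ[K] Y w)
    (hπ : ∀ e x, γ (src e) x = 0 → χ e (π (src e) x) = π (tgt e) (φ e x)) :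
    ∃ r, IsHom φ χ r ∧ ∀ w x, γ w x = 0 → r w x = π w x := by
  -- The failure of `π` to be a morphism factors through `γ`, so it is a commutator
  -- with `χ` composed with `γ`.
  choose ψ hψ using fun e => exists_comp_eq_of_ker_le_ker (f := γ (src e))
    (g := χ e ∘ₗ π (src e) - π (tgt e) ∘ₗ φ e) fun x hx => sub_eq_zero.2 (hπ e x hx)
  obtain ⟨h, rfl⟩ := hχ ψ
  refine ⟨fun w => π w - h w ∘ₗ γ w, fun e x => ?_, fun w x hx => ?_⟩
  · have hx : χ e (h _ (γ _ x)) - h _ (χ e (γ _ x)) = χ e (π _ x) - π _ (φ e x) :=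
      LinearMap.congr_fun (hψ e) x
    rw [hγ] at hx
    simp only [LinearMap.sub_apply, LinearMap.comp_apply, map_sub]
    rw [sub_eq_sub_iff_sub_eq_sub, ← hx]
  · rw [LinearMap.sub_apply, LinearMap.comp_apply, hx, map_zero, sub_zero]

lemma IsIndecomposable.surjective_of_retraction {φ : QuiverRep K src tgt X}
    (hφ : φ.IsIndecomposable) {χ : QuiverRep K src tgt Y} {ι : ∀ w, Y w →ₗ[K] X w}
    {r : ∀ w, X w →ₗ[K] Y w} (hι : IsHom χ φ ι) (hr : IsHom φ χ r) (hrι : ∀ w y, r w (ι w y) = y)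
    (hY : ∃ w, Nontrivial (Y w)) (w : W) : Function.Surjective (ι w) := by
  have hidem : IsIdempotentElem (fun w => ι w ∘ₗ r w : ∀ w, Module.End K (X w)) :=
    funext fun w => LinearMap.ext fun x => congrArg (ι w) (hrι w (r w x))
  rcases hφ.2 _ (hι.comp hr) hidem with h0 | h1
  · obtain ⟨w', hw'⟩ := hY
    obtain ⟨y, hy⟩ := exists_ne (0 : Y w')
    refine absurd ?_ hy
    calc y = r w' (ι w' (r w' (ι w' y))) := by rw [hrι, hrι]
      _ = 0 := by
        rw [show ι w' (r w' (ι w' y)) = 0 from LinearMap.congr_fun (congrFun h0 w') _, map_zero]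
  · exact fun x => ⟨r w x, LinearMap.congr_fun (congrFun h1 w) x⟩

/-- The nonzero endomorphisms of square zero. -/
def IsSquareZero (φ : QuiverRep K src tgt X) (θ : ∀ w, Module.End K (X w)) : Prop :=
  θ ∈ φ.endAlgebra ∧ θ ≠ 0 ∧ θ ^ 2 = 0

lemma IsIndecomposable.exists_isSquareZero [IsAlgClosed K] [Finite W]
    [∀ w, Module.Finite K (X w)] {φ : QuiverRep K src tgt X}
    (hφ : φ.IsIndecomposable) (hb : ¬ φ.IsBrick) : ∃ θ, φ.IsSquareZero θ := by
  have : FiniteDimensional K φ.endAlgebra :=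
    inferInstanceAs (FiniteDimensional K (Subalgebra.toSubmodule φ.endAlgebra))
  have hidem (f : φ.endAlgebra) (hf : IsIdempotentElem f) : f = 0 ∨ f = 1 :=
    (hφ.2 f f.2 (congrArg Subtype.val hf)).imp Subtype.ext Subtype.ext
  obtain ⟨θ, hθ, hθ2⟩ := exists_ne_zero_sq_eq_zero_of_bot_ne_top (K := K) hidem fun h =>
    hb (eq_bot_iff.2 fun f hf => by
      obtain ⟨c, hc⟩ := Algebra.mem_bot.1 (h.ge (Algebra.mem_top : (⟨f, hf⟩ : φ.endAlgebra) ∈ ⊤))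
      exact Algebra.mem_bot.2 ⟨c, congrArg Subtype.val hc⟩)
  exact ⟨θ, θ.2, fun h => hθ (Subtype.ext h), congrArg Subtype.val hθ2⟩

/-- The linear map `x ↦ p (θ x)` to the image of an endomorphism `p` of the kernel of `θ`. -/
def toImage {θ : ∀ w, Module.End K (X w)} (hθ : θ ^ 2 = 0)
    (p : ∀ w, Module.End K (LinearMap.ker (θ w))) (w : W) : X w →ₗ[K] LinearMap.range (p w) :=
  (p w).rangeRestrict ∘ₗ (θ w).codRestrict (LinearMap.ker (θ w)) fun x =>
    LinearMap.congr_fun (congrFun ((sq θ).symm.trans hθ) w) x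

lemma ker_le_ker_toImage {θ : ∀ w, Module.End K (X w)} (hθ : θ ^ 2 = 0)
    (p : ∀ w, Module.End K (LinearMap.ker (θ w))) (w : W) :
    LinearMap.ker (θ w) ≤ LinearMap.ker (toImage hθ p w) :=
  (LinearMap.ker_codRestrict _ (θ w) _).ge.trans (LinearMap.ker_le_ker_comp _ _)

lemma isHom_toImage {φ : QuiverRep K src tgt X} {θ : ∀ w, Module.End K (X w)}
    (hθ : φ.IsSquareZero θ) {p : ∀ w, Module.End K (LinearMap.ker (θ w))}
    (hp : p ∈ (kernel hθ.1).endAlgebra) : IsHom φ (image hp) (toImage hθ.2.2 p) :=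
  IsHom.comp (isHom_rangeRestrict hp) fun e x => Subtype.ext (hθ.1 e x)

lemma ker_toImage_le_ker {φ : QuiverRep K src tgt X} {θ : ∀ w, Module.End K (X w)}
    (hmax : MaximalFor φ.IsSquareZero (fun θ w => LinearMap.ker (θ w)) θ)
    {p : ∀ w, Module.End K (LinearMap.ker (θ w))} (hp : p ∈ (kernel hmax.prop.1).endAlgebra)
    (hpθ : ∃ w x, toImage hmax.prop.2.2 p w x ≠ 0) (w : W) :
    LinearMap.ker (toImage hmax.prop.2.2 p w) ≤ LinearMap.ker (θ w) := by
  let γ := toImage hmax.prop.2.2 p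
  have hθγ : ∀ w, LinearMap.ker (θ w) ≤ LinearMap.ker (γ w) := ker_le_ker_toImage hmax.prop.2.2 p
  -- Included in `X`, the map `γ` is another endomorphism of square zero.
  let θ' : ∀ w, Module.End K (X w) := fun w =>
    (LinearMap.ker (θ w)).subtype ∘ₗ (LinearMap.range (p w)).subtype ∘ₗ γ w
  have hθ' : φ.IsSquareZero θ' := by
    refine ⟨?_, ?_, ?_⟩
    · exact IsHom.comp (isHom_subtype _) (IsHom.comp (isHom_subtype _) (isHom_toImage hmax.prop hp))
    · obtain ⟨w, x, hx⟩ := hpθ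
      exact fun h => hx (Subtype.ext (Subtype.ext (LinearMap.congr_fun (congrFun h w) x)))
    · ext w x
      have hx : γ w (γ w x : LinearMap.ker (θ w)) = 0 := hθγ w (γ w x : LinearMap.ker (θ w)).2
      rw [sq, Pi.mul_apply, Module.End.mul_apply]
      simp only [θ', LinearMap.comp_apply, Submodule.subtype_apply, hx]
      rfl
  have hγθ' : ∀ w, LinearMap.ker (γ w) ≤ LinearMap.ker (θ' w) := fun w _ hx =>
    congrArg (fun y : LinearMap.range (p w) => (y : X w)) hx
  exact (hγθ' w).trans (hmax.le_of_le hθ' (fun w => (hθγ w).trans (hγθ' w)) w)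

lemma exists_retraction {φ : QuiverRep K src tgt X} {θ : ∀ w, Module.End K (X w)}
    (hmax : MaximalFor φ.IsSquareZero (fun θ w => LinearMap.ker (θ w)) θ)
    {p : ∀ w, Module.End K (LinearMap.ker (θ w))} (hp : p ∈ (kernel hmax.prop.1).endAlgebra)
    (hpp : IsIdempotentElem p) (hsurj : Function.Surjective (image hp).commutator)
    (hpθ : ∃ w x, toImage hmax.prop.2.2 p w x ≠ 0) :
    ∃ r, IsHom φ (image hp) r ∧ ∀ w (y : LinearMap.range (p w)), r w y = y := by
  have hθγ := ker_le_ker_toImage hmax.prop.2.2 p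
  have hker := ker_toImage_le_ker hmax hp hpθ
  choose π hπ using fun w => LinearMap.exists_extend (p w).rangeRestrict
  have hπ' (w) (x : LinearMap.ker (θ w)) : π w x = (p w).rangeRestrict x :=
    LinearMap.congr_fun (hπ w) x
  obtain ⟨r, hr, hrπ⟩ := exists_isHom_eqOn_ker hsurj (isHom_toImage hmax.prop hp) π fun e x hx => by
    let x' : LinearMap.ker (θ (src e)) := ⟨x, hker _ hx⟩
    have := isHom_rangeRestrict hp e x'
    rw [← hπ', ← hπ'] at this
    exact this
  refine ⟨r, hr, fun w y => ?_⟩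
  rw [hrπ w _ (hθγ w y.1.2), hπ', rangeRestrict_apply_of_isIdempotentElem hpp]

lemma IsIndecomposable.isBrick [IsAlgClosed K] [Fintype W] [Fintype A]
    (hpos : (titsForm src tgt).PosDef) {X : W → Type*} [∀ w, AddCommGroup (X w)]
    [∀ w, Module K (X w)] [∀ w, Module.Finite K (X w)] {φ : QuiverRep K src tgt X}
    (hφ : φ.IsIndecomposable) : φ.IsBrick := by
  by_contra hb
  have : WellFoundedGT (∀ w, Submodule K (X w)) :=
    Pi.wellFoundedLT (α := fun w => (Submodule K (X w))ᵒᵈ)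
  obtain ⟨θ, hmax⟩ := exists_maximalFor_of_wellFoundedGT φ.IsSquareZero
    (fun θ w => LinearMap.ker (θ w)) (hφ.exists_isSquareZero hb)
  obtain ⟨w₀, x₀, hx₀⟩ : ∃ w x, θ w x ≠ 0 := by
    by_contra! h
    exact hmax.prop.2.1 (funext fun w => LinearMap.ext (h w))
  have hθθ : θ w₀ (θ w₀ x₀) = 0 :=
    LinearMap.congr_fun (congrFun ((sq θ).symm.trans hmax.prop.2.2) w₀) x₀
  obtain ⟨p, hp, hpp, hpx, hC⟩ := (kernel hmax.prop.1).exists_isIndecomposable_image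
    (x₀ := ⟨θ w₀ x₀, hθθ⟩) fun h => hx₀ (congrArg Subtype.val h)
  have : ∑ w, Module.finrank K (LinearMap.range (p w)) < ∑ w, Module.finrank K (X w) := by
    have hle (w) : Module.finrank K (LinearMap.range (p w)) ≤ Module.finrank K (X w) :=
      (Submodule.finrank_le _).trans (Submodule.finrank_le _)
    refine Finset.sum_lt_sum (fun w _ => hle w) ⟨w₀, Finset.mem_univ _, ?_⟩
    refine (Submodule.finrank_le _).trans_lt (Submodule.finrank_lt fun htop => hx₀ ?_)
    exact LinearMap.mem_ker.1 (htop ▸ Submodule.mem_top)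
  have hCb : (image hp).IsBrick := IsIndecomposable.isBrick hpos hC
  obtain ⟨r, hr, hrp⟩ := exists_retraction hmax hp hpp (hCb.commutator_surjective hpos hC.1)
    ⟨w₀, x₀, fun h => hpx (congrArg Subtype.val h)⟩
  obtain ⟨y, hy⟩ := hφ.surjective_of_retraction
    (IsHom.comp (isHom_subtype _) (isHom_subtype _)) hr hrp hC.1 w₀ x₀
  exact hx₀ (hy ▸ y.1.2)
termination_by ∑ w, Module.finrank K (X w)

end Bricks

end QuiverRep

end QuiverReps
section Comodules

variable {K : Type} [CommRing K] {H : Type} [AddCommGroup H] [Module K H]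

section Slice

variable {M N : Type} [AddCommGroup M] [Module K M] [AddCommGroup N] [Module K N]

/-- The slice map `M ⊗ H → M`, `m ⊗ h ↦ ζ h • m`, of a functional `ζ` on `H`. Slicing a coaction
turns a right `H`-comodule into a module over the dual algebra of `H`. -/
noncomputable def slice (M : Type) [AddCommGroup M] [Module K M] (ζ : H →ₗ[K] K) :
    M ⊗[K] H →ₗ[K] M :=
  (TensorProduct.rid K M).toLinearMap ∘ₗ LinearMap.lTensor M ζ

@[simp]
lemma slice_tmul (ζ : H →ₗ[K] K) (m : M) (h : H) : slice M ζ (m ⊗ₜ[K] h) = ζ h • m := by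
  simp [slice]

lemma slice_rTensor (ζ : H →ₗ[K] K) (f : M →ₗ[K] N) (z : M ⊗[K] H) :
    slice N ζ (LinearMap.rTensor H f z) = f (slice M ζ z) := by
  induction z using TensorProduct.induction_on with
  | zero => simp
  | tmul m h => simp
  | add a b ha hb => simp only [map_add, ha, hb]

lemma lTensor_rTensor_comm {P Q : Type*} [AddCommGroup P] [Module K P] [AddCommGroup Q]
    [Module K Q] (f : M →ₗ[K] N) (g : P →ₗ[K] Q) (z : M ⊗[K] P) :
    LinearMap.lTensor N g (LinearMap.rTensor P f z) =
      LinearMap.rTensor Q f (LinearMap.lTensor M g z) := by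
  rw [← LinearMap.comp_apply, ← LinearMap.comp_apply, LinearMap.lTensor_comp_rTensor,
    LinearMap.rTensor_comp_lTensor]

lemma eq_sum_slice_tmul {ι : Type*} [Fintype ι] {D : Submodule K H} {ζ : ι → H →ₗ[K] K} {b : ι → H}
    (hb : ∀ h ∈ D, h = ∑ i, ζ i h • b i) {z : M ⊗[K] H}
    (hz : z ∈ LinearMap.range (LinearMap.lTensor M D.subtype)) :
    z = ∑ i, slice M (ζ i) z ⊗ₜ[K] b i := by
  obtain ⟨y, rfl⟩ := hz
  induction y using TensorProduct.induction_on with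
  | zero => simp
  | tmul m d =>
    simp only [LinearMap.lTensor_tmul, Submodule.subtype_apply, slice_tmul, TensorProduct.smul_tmul,
      ← TensorProduct.tmul_sum, ← hb d d.2]
  | add a b ha hb =>
    simp only [map_add, TensorProduct.add_tmul, Finset.sum_add_distrib]
    exact congrArg₂ (· + ·) ha hb

end Slice

variable [Coalgebra K H]

namespace ComodHom

variable {M N P : Comod K H}

/-- The composition of comodule morphisms. -/
def comp (f : ComodHom K H N P) (f' : ComodHom K H M N) : ComodHom K H M P where
  toLin := f.toLin ∘ₗ f'.toLin
  compat m := by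
    rw [LinearMap.comp_apply, f.compat, f'.compat, ← LinearMap.rTensor_comp_apply]

/-- The inverse of a bijective comodule morphism. -/
noncomputable def symm (f : ComodHom K H M N) (hf : Function.Bijective f.toLin) :
    ComodHom K H N M where
  toLin := (LinearEquiv.ofBijective f.toLin hf).symm.toLinearMap
  compat n := by
    have hid : (LinearEquiv.ofBijective f.toLin hf).symm.toLinearMap ∘ₗ f.toLin = LinearMap.id :=
      LinearMap.ext (LinearEquiv.ofBijective f.toLin hf).symm_apply_apply
    obtain ⟨m, rfl⟩ := hf.2 n
    rw [f.compat, ← LinearMap.rTensor_comp_apply, hid, LinearMap.rTensor_id, LinearMap.id_apply]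
    exact congrArg M.ρ (LinearMap.congr_fun hid m)

lemma map_slice (f : ComodHom K H M N) (ζ : H →ₗ[K] K) (m : M.carrier) :
    f.toLin (slice M.carrier ζ (M.ρ m)) = slice N.carrier ζ (N.ρ (f.toLin m)) := by
  rw [f.compat, slice_rTensor]

end ComodHom

variable (K H) in
/-- Isomorphism of comodules, as an equivalence relation. -/
def comodSetoid : Setoid (Comod K H) where
  r := ComodIso K H
  iseqv :=
    { refl := fun M => ⟨⟨LinearMap.id, fun m => by simp⟩, Function.bijective_id⟩
      symm := fun ⟨f, hf⟩ => ⟨f.symm hf, (LinearEquiv.ofBijective f.toLin hf).symm.bijective⟩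
      trans := fun ⟨f, hf⟩ ⟨f', hf'⟩ => ⟨f'.comp f, hf'.comp hf⟩ }

lemma ComodIso.indec {M N : Comod K H} (h : ComodIso K H M N) (hM : M.Indec K H) :
    N.Indec K H := by
  obtain ⟨f, hf⟩ := h
  refine ⟨hM.1.imp' f.toLin fun m hm h0 => hm (hf.1 (h0.trans (map_zero _).symm)),
    fun a ha => ?_⟩
  have happly : ∀ m, f.toLin (((f.symm hf).comp (a.comp f)).toLin m) = a.toLin (f.toLin m) :=
    fun m => (LinearEquiv.ofBijective f.toLin hf).apply_symm_apply _
  refine (hM.2 ((f.symm hf).comp (a.comp f)) (LinearMap.ext fun m => hf.1 ?_)).imp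
    (fun h0 => LinearMap.ext fun n => ?_) fun h1 => LinearMap.ext fun n => ?_
  · simp only [LinearMap.comp_apply, happly]
    exact LinearMap.congr_fun ha _
  all_goals obtain ⟨m, rfl⟩ := hf.2 n
  · rw [← happly, h0, LinearMap.zero_apply, map_zero, LinearMap.zero_apply]
  · rw [← happly, h1, LinearMap.id_apply, LinearMap.id_apply]

lemma CoactsThrough.of_surjective {M N : Comod K H} {D : Submodule K H}
    (hM : CoactsThrough K H M D) (f : ComodHom K H M N) (hf : Function.Surjective f.toLin) :
    CoactsThrough K H N D := by
  intro n
  obtain ⟨m, rfl⟩ := hf n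
  obtain ⟨z, hz⟩ := hM m
  refine ⟨LinearMap.rTensor D f.toLin z, ?_⟩
  rw [f.compat, ← hz, lTensor_rTensor_comm]

namespace Comod

section Transfer

variable {M : Comod K H} {N : Type} [AddCommGroup N] [Module K N] {f : M.carrier →ₗ[K] N}
  {ρ : N →ₗ[K] N ⊗[K] H}

lemma counit_comp_of_intertwines (h : ∀ m, ρ (f m) = LinearMap.rTensor H f (M.ρ m))
    (m : M.carrier) :
    (TensorProduct.rid K N) (LinearMap.lTensor N Coalgebra.counit (ρ (f m))) = f m := by
  rw [h]
  exact (slice_rTensor Coalgebra.counit f (M.ρ m)).trans (congrArg f (M.counit_comp m))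

lemma coassoc_of_intertwines (h : ∀ m, ρ (f m) = LinearMap.rTensor H f (M.ρ m)) (m : M.carrier) :
    LinearMap.lTensor N Coalgebra.comul (ρ (f m)) =
      (TensorProduct.assoc K N H H) (LinearMap.rTensor H ρ (ρ (f m))) := by
  have hρ : ρ ∘ₗ f = LinearMap.rTensor H f ∘ₗ M.ρ := LinearMap.ext h
  have hassoc : ∀ z : (M.carrier ⊗[K] H) ⊗[K] H,
      (TensorProduct.assoc K N H H) (LinearMap.rTensor H (LinearMap.rTensor H f) z) =
        LinearMap.rTensor (H ⊗[K] H) f (TensorProduct.assoc K M.carrier H H z) := fun z => by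
    rw [LinearMap.rTensor_tensor, LinearMap.comp_apply, LinearMap.comp_apply,
      LinearEquiv.coe_coe, LinearEquiv.coe_coe, LinearEquiv.symm_apply_apply]
  rw [h, ← LinearMap.rTensor_comp_apply, hρ, LinearMap.rTensor_comp_apply, hassoc, ← M.coassoc,
    lTensor_rTensor_comm]

end Transfer

variable (K H) in
/-- The zero comodule. -/
noncomputable def zero : Comod K H where
  carrier := PUnit
  ρ := 0
  counit_comp _ := rfl
  coassoc _ := by simp only [LinearMap.zero_apply, map_zero]

lemma comodIso_zero (M : Comod K H) [Subsingleton M.carrier] : ComodIso K H M (zero K H) :=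
  ⟨⟨0, fun m => by rw [LinearMap.rTensor_zero]; rfl⟩,
    fun _ _ _ => Subsingleton.elim _ _, fun _ => ⟨0, rfl⟩⟩

/-- The direct sum of two comodules. -/
noncomputable def prod (M N : Comod K H) : Comod K H :=
  let ρ : M.carrier × N.carrier →ₗ[K] (M.carrier × N.carrier) ⊗[K] H :=
    LinearMap.coprod (LinearMap.rTensor H (LinearMap.inl K M.carrier N.carrier) ∘ₗ M.ρ)
      (LinearMap.rTensor H (LinearMap.inr K M.carrier N.carrier) ∘ₗ N.ρ)
  have inl m : ρ (LinearMap.inl K M.carrier N.carrier m) =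
      LinearMap.rTensor H (LinearMap.inl K M.carrier N.carrier) (M.ρ m) := by simp [ρ]
  have inr n : ρ (LinearMap.inr K M.carrier N.carrier n) =
      LinearMap.rTensor H (LinearMap.inr K M.carrier N.carrier) (N.ρ n) := by simp [ρ]
  { carrier := M.carrier × N.carrier
    ρ := ρ
    counit_comp := fun ⟨m, n⟩ => by
      rw [← Prod.fst_add_snd (m, n)]
      simpa only [map_add, LinearMap.inl_apply, LinearMap.inr_apply] using congrArg₂ (· + ·)
        (counit_comp_of_intertwines inl m) (counit_comp_of_intertwines inr n)
    coassoc := fun ⟨m, n⟩ => by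
      rw [← Prod.fst_add_snd (m, n)]
      simpa only [map_add, LinearMap.inl_apply, LinearMap.inr_apply] using congrArg₂ (· + ·)
        (coassoc_of_intertwines inl m) (coassoc_of_intertwines inr n) }

lemma rTensor_rangeRestrict_coaction {M : Comod K H} (f : ComodHom K H M M)
    (hf : IsIdempotentElem (f.toLin : Module.End K M.carrier)) (m : M.carrier) :
    LinearMap.rTensor H f.toLin.rangeRestrict (M.ρ (f.toLin m)) =
      LinearMap.rTensor H f.toLin.rangeRestrict (M.ρ m) := by
  have hff : f.toLin.rangeRestrict ∘ₗ f.toLin = f.toLin.rangeRestrict :=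
    LinearMap.ext fun m => Subtype.ext (LinearMap.congr_fun hf m)
  rw [f.compat, ← LinearMap.rTensor_comp_apply]
  exact congrArg (fun π => LinearMap.rTensor H π (M.ρ m)) hff

/-- The direct summand of a comodule that is the image of an idempotent endomorphism. -/
noncomputable def summand {M : Comod K H} (f : ComodHom K H M M)
    (hf : IsIdempotentElem (f.toLin : Module.End K M.carrier)) : Comod K H :=
  let ρ := LinearMap.rTensor H f.toLin.rangeRestrict ∘ₗ M.ρ ∘ₗ (LinearMap.range f.toLin).subtype
  have hρ m : ρ (f.toLin.rangeRestrict m) = LinearMap.rTensor H f.toLin.rangeRestrict (M.ρ m) :=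
    rTensor_rangeRestrict_coaction f hf m
  { carrier := LinearMap.range f.toLin
    ρ := ρ
    counit_comp := f.toLin.surjective_rangeRestrict.forall.2 (counit_comp_of_intertwines hρ)
    coassoc := f.toLin.surjective_rangeRestrict.forall.2 (coassoc_of_intertwines hρ) }

/-- The projection onto the image of an idempotent endomorphism. -/
noncomputable def toSummand {M : Comod K H} (f : ComodHom K H M M)
    (hf : IsIdempotentElem (f.toLin : Module.End K M.carrier)) :
    ComodHom K H M (summand f hf) where
  toLin := f.toLin.rangeRestrict
  compat := rTensor_rangeRestrict_coaction f hf

lemma toSummand_surjective {M : Comod K H} (f : ComodHom K H M M)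
    (hf : IsIdempotentElem (f.toLin : Module.End K M.carrier)) :
    Function.Surjective (toSummand f hf).toLin :=
  f.toLin.surjective_rangeRestrict

end Comod

namespace ComodHom

variable {M M' N N' : Comod K H}

/-- The morphism to a direct sum of comodules with given components. -/
def prod (f : ComodHom K H M N) (f' : ComodHom K H M N') : ComodHom K H M (N.prod N') where
  toLin := f.toLin.prod f'.toLin
  compat m := by
    change LinearMap.rTensor H (LinearMap.inl K N.carrier N'.carrier) (N.ρ (f.toLin m)) +
      LinearMap.rTensor H (LinearMap.inr K N.carrier N'.carrier) (N'.ρ (f'.toLin m)) = _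
    have hprod : f.toLin.prod f'.toLin = LinearMap.inl K N.carrier N'.carrier ∘ₗ f.toLin +
        LinearMap.inr K N.carrier N'.carrier ∘ₗ f'.toLin := LinearMap.ext fun m => by simp
    rw [f.compat, f'.compat, hprod, ← LinearMap.rTensor_comp_apply, ← LinearMap.rTensor_comp_apply,
      ← LinearMap.add_apply, ← LinearMap.rTensor_add]
    rfl

/-- The direct sum of two morphisms of comodules. -/
def prodMap (f : ComodHom K H M M') (f' : ComodHom K H N N') :
    ComodHom K H (M.prod N) (M'.prod N') where
  toLin := f.toLin.prodMap f'.toLin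
  compat := fun ⟨m, n⟩ => by
    have hinl : f.toLin.prodMap f'.toLin ∘ₗ LinearMap.inl K M.carrier N.carrier =
        LinearMap.inl K M'.carrier N'.carrier ∘ₗ f.toLin := LinearMap.ext fun m => by simp
    have hinr : f.toLin.prodMap f'.toLin ∘ₗ LinearMap.inr K M.carrier N.carrier =
        LinearMap.inr K M'.carrier N'.carrier ∘ₗ f'.toLin := LinearMap.ext fun n => by simp
    change LinearMap.rTensor H (LinearMap.inl K M'.carrier N'.carrier) (M'.ρ (f.toLin m)) +
        LinearMap.rTensor H (LinearMap.inr K M'.carrier N'.carrier) (N'.ρ (f'.toLin n)) =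
      LinearMap.rTensor H (f.toLin.prodMap f'.toLin)
        (LinearMap.rTensor H (LinearMap.inl K M.carrier N.carrier) (M.ρ m) +
          LinearMap.rTensor H (LinearMap.inr K M.carrier N.carrier) (N.ρ n))
    rw [map_add, f.compat, f'.compat, ← LinearMap.rTensor_comp_apply,
      ← LinearMap.rTensor_comp_apply, ← LinearMap.rTensor_comp_apply,
      ← LinearMap.rTensor_comp_apply, hinl, hinr]

/-- The complement `1 - f` of an endomorphism `f`. -/
def compl (f : ComodHom K H M M) : ComodHom K H M M where
  toLin := LinearMap.id - f.toLin
  compat m := by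
    rw [LinearMap.sub_apply, map_sub, f.compat, LinearMap.rTensor_sub, LinearMap.sub_apply,
      LinearMap.rTensor_id, LinearMap.id_apply, LinearMap.id_apply]

end ComodHom

lemma ComodIso.prod {M M' N N' : Comod K H} (h : ComodIso K H M M') (h' : ComodIso K H N N') :
    ComodIso K H (M.prod N) (M'.prod N') :=
  let ⟨f, hf⟩ := h
  let ⟨f', hf'⟩ := h'
  ⟨f.prodMap f', hf.prodMap hf'⟩

namespace Comod

lemma comodIso_prod_summand {M : Comod K H} (f : ComodHom K H M M)
    (hf : IsIdempotentElem (f.toLin : Module.End K M.carrier)) :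
    ComodIso K H M ((summand f hf).prod (summand f.compl hf.one_sub)) := by
  have hff m : f.toLin (f.toLin m) = f.toLin m := LinearMap.congr_fun hf m
  refine ⟨(toSummand f hf).prod (toSummand f.compl hf.one_sub),
    (injective_iff_map_eq_zero _).2 fun m hm => ?_, ?_⟩
  · have h₁ : f.toLin m = 0 := congrArg Subtype.val (congrArg Prod.fst hm)
    have h₂ : m - f.toLin m = 0 := congrArg Subtype.val (congrArg Prod.snd hm)
    rwa [h₁, sub_zero] at h₂
  · rintro ⟨⟨_, a, rfl⟩, ⟨_, b, rfl⟩⟩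
    refine ⟨f.toLin a + (b - f.toLin b), Prod.ext (Subtype.ext ?_) (Subtype.ext ?_)⟩
    · change f.toLin (f.toLin a + (b - f.toLin b)) = f.toLin a
      rw [map_add, map_sub, hff, hff, sub_self, add_zero]
    · change f.toLin a + (b - f.toLin b) - f.toLin (f.toLin a + (b - f.toLin b)) = b - f.toLin b
      rw [map_add, map_sub, hff, hff, sub_self, add_zero, add_sub_cancel_left]

end Comod

end Comodules

section KrullSchmidt

variable {K : Type} [Field K] {H : Type} [AddCommGroup H] [Module K H] [Coalgebra K H]

namespace Comod

variable (K H) in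
/-- `M` is a finite-dimensional comodule over the subcoalgebra `D`. -/
def IsFiniteOver (D : Submodule K H) (M : Comod K H) : Prop :=
  Module.Finite K M.carrier ∧ CoactsThrough K H M D

lemma exists_comodIso_prod_of_not_indec {M : Comod K H} [Module.Finite K M.carrier]
    [Nontrivial M.carrier] {D : Submodule K H} (hD : CoactsThrough K H M D)
    (hM : ¬ M.Indec K H) :
    ∃ P Q : Comod K H, ComodIso K H M (P.prod Q) ∧
      (P.IsFiniteOver K H D ∧ Module.finrank K P.carrier < Module.finrank K M.carrier) ∧
      (Q.IsFiniteOver K H D ∧ Module.finrank K Q.carrier < Module.finrank K M.carrier) := by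
  have summand_lt (f : ComodHom K H M M)
      (hf : IsIdempotentElem (f.toLin : Module.End K M.carrier)) (h1 : f.toLin ≠ LinearMap.id) :
      (summand f hf).IsFiniteOver K H D ∧
        Module.finrank K (summand f hf).carrier < Module.finrank K M.carrier := by
    refine ⟨⟨Module.Finite.range f.toLin, hD.of_surjective _ (toSummand_surjective f hf)⟩,
      Submodule.finrank_lt fun htop => h1 ?_⟩
    exact LinearMap.ext ((LinearMap.range_eq_top.1 htop).forall.2 (LinearMap.congr_fun hf))
  simp only [Indec, exists_ne, true_and, not_forall, not_or] at hM
  obtain ⟨f, hf, h0, h1⟩ := hM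
  refine ⟨_, _, comodIso_prod_summand f hf, summand_lt f hf h1, summand_lt f.compl _ fun h => h0 ?_⟩
  exact sub_eq_self.1 h

theorem finiteUpTo_finrank_lt {D : Submodule K H}
    (hD : ∀ n, FiniteUpTo (comodSetoid K H)
      fun M => M.Indec K H ∧ M.IsFiniteOver K H D ∧ Module.finrank K M.carrier = n) (n : ℕ) :
    FiniteUpTo (comodSetoid K H)
      fun M => M.IsFiniteOver K H D ∧ Module.finrank K M.carrier < n := by
  induction n with
  | zero => exact ⟨∅, Set.finite_empty, fun M hM => absurd hM.2 (Nat.not_lt_zero _)⟩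
  | succ n ih =>
    obtain ⟨S, hS, hindec⟩ := hD n
    obtain ⟨T, hT, hlt⟩ := ih
    refine ⟨{zero K H} ∪ S ∪ T ∪ Set.image2 prod T T,
      (((Set.finite_singleton _).union hS).union hT).union (hT.image2 _ hT), fun M hM => ?_⟩
    obtain ⟨⟨hfin, hMD⟩, hMn⟩ := hM
    rcases subsingleton_or_nontrivial M.carrier with hzero | hnontriv
    · exact ⟨zero K H, by simp, comodIso_zero M⟩
    rcases Nat.lt_succ_iff_lt_or_eq.1 hMn with hlt' | heq
    · obtain ⟨R, hR, hMR⟩ := hlt M ⟨⟨hfin, hMD⟩, hlt'⟩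
      exact ⟨R, by simp [hR], hMR⟩
    by_cases hM : M.Indec K H
    · obtain ⟨R, hR, hMR⟩ := hindec M ⟨hM, ⟨hfin, hMD⟩, heq⟩
      exact ⟨R, by simp [hR], hMR⟩
    · obtain ⟨P, Q, hMPQ, ⟨hPD, hP⟩, hQD, hQ⟩ := exists_comodIso_prod_of_not_indec hMD hM
      obtain ⟨R, hR, hPR⟩ := hlt P ⟨hPD, heq ▸ hP⟩
      obtain ⟨R', hR', hQR'⟩ := hlt Q ⟨hQD, heq ▸ hQ⟩
      exact ⟨R.prod R', Or.inr ⟨R, hR, R', hR', rfl⟩,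
        (comodSetoid K H).trans hMPQ (ComodIso.prod hPR hQR')⟩

end Comod

end KrullSchmidt

section RadSqZeroAction

variable {V A : Type*} [Fintype V]

/-- The elements `p v` and `u e` of `R` satisfy the relations between the vertices and the arrows
of the path algebra of a quiver modulo the paths of length two. Paths are composed as
`p (s e) * u e * p (t e)`, so that these are the relations satisfied by the functionals dual to the
vertices and the arrows of `KQ₁`. -/
structure IsRadSqZeroAction {R : Type*} [Semiring R] (s t : A → V) (p : V → R) (u : A → R) :
    Prop where
  idem : CompleteOrthogonalIdempotents p
  source_mul : ∀ e, p (s e) * u e = u e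
  mul_target : ∀ e, u e * p (t e) = u e
  arrow_mul_arrow : ∀ e f, u e * u f = 0

lemma completeOrthogonalIdempotents_elim_mul_one_sub_mul {R : Type*} [Ring R] {p : V → R}
    (hp : CompleteOrthogonalIdempotents p) {π : R} (hπ : IsIdempotentElem π)
    (hcomm : ∀ v, Commute π (p v)) :
    CompleteOrthogonalIdempotents
      (Sum.elim (fun v => π * p v) fun v => (1 - π) * p v : V ⊕ V → R) := by
  have hmul {a b : R} (hb : ∀ v, Commute b (p v)) (v w : V) :
      a * p v * (b * p w) = a * b * (p v * p w) := by
    rw [mul_assoc, ← mul_assoc (p v), ← (hb v).eq, mul_assoc b, mul_assoc]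
  have hcomm' v : Commute (1 - π) (p v) := (Commute.one_left _).sub_left (hcomm v)
  refine ⟨⟨?_, ?_⟩, ?_⟩
  · rintro (v | v)
    · exact (hmul hcomm v v).trans (by rw [hπ, hp.idem v, Sum.elim_inl])
    · exact (hmul hcomm' v v).trans (by rw [hπ.one_sub, hp.idem v, Sum.elim_inr])
  · rintro (v | v) (w | w) hvw
    · exact (hmul hcomm v w).trans (by rw [hp.ortho (hvw <| congrArg _ ·), mul_zero])
    · exact (hmul hcomm' v w).trans (by rw [hπ.mul_one_sub_self, zero_mul])
    · exact (hmul hcomm v w).trans (by rw [hπ.one_sub_mul_self, zero_mul])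
    · exact (hmul hcomm' v w).trans (by rw [hp.ortho (hvw <| congrArg _ ·), mul_zero])
  · rw [Fintype.sum_sum_type]
    simp only [Sum.elim_inl, Sum.elim_inr]
    rw [← Finset.mul_sum, ← Finset.mul_sum, hp.complete, mul_one, mul_one, add_sub_cancel]

namespace IsRadSqZeroAction

lemma vertex_mul_arrow {R : Type*} [Semiring R] [DecidableEq V] {s t : A → V} {p : V → R}
    {u : A → R} (h : IsRadSqZeroAction s t p u) (v : V) (e : A) :
    p v * u e = if v = s e then u e else 0 := by
  split_ifs with hv
  · rw [hv, h.source_mul]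
  · rw [← h.source_mul, ← mul_assoc, h.idem.ortho hv, zero_mul]

lemma arrow_mul_vertex {R : Type*} [Semiring R] [DecidableEq V] {s t : A → V} {p : V → R}
    {u : A → R} (h : IsRadSqZeroAction s t p u) (e : A) (v : V) :
    u e * p v = if v = t e then u e else 0 := by
  split_ifs with hv
  · rw [hv, h.mul_target]
  · rw [← h.mul_target, mul_assoc, h.idem.ortho (Ne.symm hv), mul_zero]

variable {K M : Type*} [Field K] [AddCommGroup M] [Module K M] {s t : A → V}
  {p : V → Module.End K M} {u : A → Module.End K M}

-- The averaging idea of Maschke's theorem, over the vertices: if `ε` is a projection onto the sum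
-- of the images of the arrows, so is `∑ v, p v * ε * p v`.
lemma exists_arrow_projection (h : IsRadSqZeroAction s t p u) :
    ∃ π : Module.End K M, IsIdempotentElem π ∧ (∀ v, Commute π (p v)) ∧
      ∀ e, π * u e = u e ∧ u e * π = 0 := by
  classical
  let S : Submodule K M := ⨆ e, LinearMap.range (u e)
  have hle {N : Submodule K M} (hN : ∀ e m, u e m ∈ N) : S ≤ N :=
    iSup_le fun e => LinearMap.range_le_iff_comap.2 (eq_top_iff.2 fun m _ => hN e m)
  have hmem e m : u e m ∈ S := Submodule.mem_iSup_of_mem e ⟨m, rfl⟩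
  have hpS v {m} (hm : m ∈ S) : p v m ∈ S := by
    refine hle (N := S.comap (p v)) (fun e m => ?_) hm
    rw [Submodule.mem_comap, ← Module.End.mul_apply, h.vertex_mul_arrow]
    split_ifs
    exacts [hmem e m, S.zero_mem]
  obtain ⟨r, hr⟩ := LinearMap.exists_leftInverse_of_injective S.subtype S.ker_subtype
  have hrS {m} (hm : m ∈ S) : (r m : M) = m := congrArg Subtype.val (LinearMap.congr_fun hr ⟨m, hm⟩)
  set π : Module.End K M := ∑ v, p v * (S.subtype ∘ₗ r) * p v with hπ
  have hπ_apply m : π m = ∑ v, p v (r (p v m)) := LinearMap.sum_apply _ _ _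
  have hπS {m} (hm : m ∈ S) : π m = m := by
    have hpp v : p v (p v m) = p v m := LinearMap.congr_fun (h.idem.idem v) m
    have hsum : ∑ v, p v m = m := by
      rw [← LinearMap.sum_apply, h.idem.complete, Module.End.one_apply]
    simp only [hπ_apply, hrS (hpS _ hm), hpp, hsum]
  have hπ_mem m : π m ∈ S := hπ_apply m ▸ S.sum_mem fun v _ => hpS v (r _).2
  refine ⟨π, LinearMap.ext fun m => hπS (hπ_mem m), fun v => ?_, fun e =>
    ⟨LinearMap.ext fun m => hπS (hmem e m), LinearMap.ext fun m => ?_⟩⟩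
  · have hl : p v * π = p v * (S.subtype ∘ₗ r) * p v := by
      simp only [hπ, Finset.mul_sum, ← mul_assoc, h.idem.mul_eq, ite_mul, zero_mul,
        Finset.sum_ite_eq, Finset.mem_univ, if_true]
    have hr : π * p v = p v * (S.subtype ∘ₗ r) * p v := by
      simp only [hπ, Finset.sum_mul, mul_assoc, h.idem.mul_eq, mul_ite, mul_zero,
        Finset.sum_ite_eq', Finset.mem_univ, if_true]
    exact hr.trans hl.symm
  · exact hle (N := LinearMap.ker (u e)) (fun f m => LinearMap.congr_fun (h.arrow_mul_arrow e f) m)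
      (hπ_mem m)

-- `P (inl v)` contains the images and `P (inr v)` covers the supports of the arrows, which makes
-- `M` a representation of the separated quiver.
lemma exists_separated (h : IsRadSqZeroAction s t p u) :
    ∃ P : V ⊕ V → Module.End K M, CompleteOrthogonalIdempotents P ∧
      (∀ v, P (Sum.inl v) + P (Sum.inr v) = p v) ∧
      ∀ e, P (Sum.inl (s e)) * u e = u e ∧ u e * P (Sum.inr (t e)) = u e := by
  obtain ⟨π, hπ, hcomm, hu⟩ := h.exists_arrow_projection
  refine ⟨_, completeOrthogonalIdempotents_elim_mul_one_sub_mul h.idem hπ hcomm, fun v => ?_,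
    fun e => ⟨?_, ?_⟩⟩
  · simp only [Sum.elim_inl, Sum.elim_inr, ← add_mul, add_sub_cancel, one_mul]
  · simp only [Sum.elim_inl, mul_assoc, h.source_mul, (hu e).1]
  · simp only [Sum.elim_inr, sub_mul, one_mul, mul_sub, h.mul_target, ← mul_assoc, (hu e).2,
      zero_mul, sub_zero]

end IsRadSqZeroAction

end RadSqZeroAction

section ArrowComodules

variable {K : Type} [CommRing K] {H : Type} [AddCommGroup H] [Module K H]
  {V A : Type*} [Fintype V] [Fintype A] {s t : A → V} {g : V → H} {x : A → H}
  {M : Type} [AddCommGroup M] [Module K M] {p : V → Module.End K M} {u : A → Module.End K M}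

/-- The coaction on `M` in which the vertices `g v` have coefficients `p v` and the arrows `x e`
have coefficients `u e`. -/
noncomputable def arrowCoaction (g : V → H) (x : A → H) (p : V → Module.End K M)
    (u : A → Module.End K M) : M →ₗ[K] M ⊗[K] H :=
  ∑ v, (TensorProduct.mk K M H).flip (g v) ∘ₗ p v + ∑ e, (TensorProduct.mk K M H).flip (x e) ∘ₗ u e

lemma arrowCoaction_apply (m : M) :
    arrowCoaction g x p u m = ∑ v, p v m ⊗ₜ[K] g v + ∑ e, u e m ⊗ₜ[K] x e := by
  simp only [arrowCoaction, LinearMap.add_apply, LinearMap.sum_apply, LinearMap.comp_apply,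
    LinearMap.flip_apply, TensorProduct.mk_apply]

lemma arrowCoaction_map {N : Type} [AddCommGroup N] [Module K N] {p' : V → Module.End K N}
    {u' : A → Module.End K N} (f : M →ₗ[K] N) (hp : ∀ v m, p' v (f m) = f (p v m))
    (hu : ∀ e m, u' e (f m) = f (u e m)) (m : M) :
    arrowCoaction g x p' u' (f m) = LinearMap.rTensor H f (arrowCoaction g x p u m) := by
  simp only [arrowCoaction_apply, map_add, map_sum, LinearMap.rTensor_tmul, hp, hu]

lemma slice_arrowCoaction (ζ : H →ₗ[K] K) (m : M) :
    slice M ζ (arrowCoaction g x p u m) = ∑ v, ζ (g v) • p v m + ∑ e, ζ (x e) • u e m := by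
  simp only [arrowCoaction_apply, map_add, map_sum, slice_tmul]

lemma arrowCoaction_mem_range_lTensor (m : M) : arrowCoaction g x p u m ∈
    LinearMap.range
      (LinearMap.lTensor M (Submodule.span K (Set.range g ∪ Set.range x)).subtype) := by
  have hmem (m : M) {h : H} (hh : h ∈ Set.range g ∪ Set.range x) : m ⊗ₜ[K] h ∈
      LinearMap.range
        (LinearMap.lTensor M (Submodule.span K (Set.range g ∪ Set.range x)).subtype) :=
    ⟨m ⊗ₜ ⟨h, Submodule.subset_span hh⟩, rfl⟩
  rw [arrowCoaction_apply]
  exact add_mem (sum_mem fun v _ => hmem _ (Or.inl ⟨v, rfl⟩))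
    (sum_mem fun e _ => hmem _ (Or.inr ⟨e, rfl⟩))

lemma arrowCoaction_vertex [DecidableEq V] (h : IsRadSqZeroAction s t p u) (v : V) (m : M) :
    arrowCoaction g x p u (p v m) =
      p v m ⊗ₜ[K] g v + ∑ e, if v = t e then u e m ⊗ₜ[K] x e else 0 := by
  simp only [arrowCoaction_apply, ← Module.End.mul_apply, h.arrow_mul_vertex, h.idem.mul_eq,
    DFunLike.ite_apply, LinearMap.zero_apply, TensorProduct.ite_tmul,
    Finset.sum_ite_eq', Finset.mem_univ, if_true]

lemma arrowCoaction_arrow (h : IsRadSqZeroAction s t p u) (e : A) (m : M) :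
    arrowCoaction g x p u (u e m) = u e m ⊗ₜ[K] g (s e) := by
  classical
  simp only [arrowCoaction_apply, ← Module.End.mul_apply, h.vertex_mul_arrow, h.arrow_mul_arrow,
    DFunLike.ite_apply, LinearMap.zero_apply, TensorProduct.zero_tmul,
    TensorProduct.ite_tmul, Finset.sum_const_zero, add_zero, Finset.sum_ite_eq', Finset.mem_univ,
    if_true]

variable [Coalgebra K H]

lemma counit_eq_zero_of_mem_skewPrim {a b y : H} (ha : IsGrouplike K H a) (hb : IsGrouplike K H b)
    (hy : y ∈ skewPrim K H a b) : Coalgebra.counit (R := K) y = 0 := by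
  have hl := Coalgebra.rTensor_counit_comul (R := K) y
  rw [(mem_skewPrim K H).1 hy, map_add, LinearMap.rTensor_tmul, LinearMap.rTensor_tmul, ha.1,
    add_eq_left] at hl
  have hr := congrArg (Coalgebra.counit (R := K)) (congrArg (TensorProduct.lid K H) hl)
  simpa only [TensorProduct.lid_tmul, map_smul, hb.1, smul_eq_mul, mul_one, map_zero] using hr

lemma coassoc_arrowCoaction (hg : ∀ v, IsGrouplike K H (g v))
    (hx : ∀ e, x e ∈ skewPrim K H (g (s e)) (g (t e))) (h : IsRadSqZeroAction s t p u) (m : M) :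
    LinearMap.lTensor M Coalgebra.comul (arrowCoaction g x p u m) =
      (TensorProduct.assoc K M H H)
        (LinearMap.rTensor H (arrowCoaction g x p u) (arrowCoaction g x p u m)) := by
  classical
  have hcomul : LinearMap.lTensor M Coalgebra.comul (arrowCoaction g x p u m) =
      ∑ v, p v m ⊗ₜ[K] (g v ⊗ₜ[K] g v) + ∑ e, u e m ⊗ₜ[K] (x e ⊗ₜ[K] g (t e)) +
        ∑ e, u e m ⊗ₜ[K] (g (s e) ⊗ₜ[K] x e) := by
    simp only [arrowCoaction_apply, map_add, map_sum, LinearMap.lTensor_tmul, (hg _).2,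
      (mem_skewPrim K H).1 (hx _), TensorProduct.tmul_add, Finset.sum_add_distrib]
    abel
  rw [hcomul, arrowCoaction_apply]
  simp only [map_add, map_sum, LinearMap.rTensor_tmul, arrowCoaction_vertex h,
    arrowCoaction_arrow h, TensorProduct.add_tmul, TensorProduct.sum_tmul, TensorProduct.ite_tmul,
    TensorProduct.assoc_tmul, Finset.sum_add_distrib, apply_ite (TensorProduct.assoc K M H H),
    map_zero]
  rw [Finset.sum_comm (s := Finset.univ (α := V))]
  simp only [Finset.sum_ite_eq', Finset.mem_univ, if_true]

namespace Comod

/-- The comodule over `KQ₁` corresponding to an action on `M` of the vertices and the arrows. -/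
noncomputable def ofAction (hg : ∀ v, IsGrouplike K H (g v))
    (hx : ∀ e, x e ∈ skewPrim K H (g (s e)) (g (t e))) (h : IsRadSqZeroAction s t p u) :
    Comod K H where
  carrier := M
  ρ := arrowCoaction g x p u
  counit_comp m := by
    simp only [arrowCoaction_apply, map_add, map_sum, LinearMap.lTensor_tmul, (hg _).1,
      counit_eq_zero_of_mem_skewPrim (hg _) (hg _) (hx _), TensorProduct.rid_tmul, one_smul,
      zero_smul, Finset.sum_const_zero, add_zero]
    rw [← LinearMap.sum_apply, h.idem.complete, Module.End.one_apply]
  coassoc := coassoc_arrowCoaction hg hx h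

lemma slice_slice (M : Comod K H) (α β : H →ₗ[K] K) (m : M.carrier) :
    slice M.carrier α (M.ρ (slice M.carrier β (M.ρ m))) =
      slice M.carrier (LinearMap.mul' K K ∘ₗ TensorProduct.map α β ∘ₗ Coalgebra.comul) (M.ρ m) := by
  have hassoc (z : (M.carrier ⊗[K] H) ⊗[K] H) :
      slice M.carrier (LinearMap.mul' K K ∘ₗ TensorProduct.map α β)
          (TensorProduct.assoc K M.carrier H H z) =
        slice M.carrier α (slice (M.carrier ⊗[K] H) β z) := by
    induction z using TensorProduct.induction_on with
    | zero => simp only [map_zero]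
    | add a b ha hb => simp only [map_add, ha, hb]
    | tmul y h =>
      induction y using TensorProduct.induction_on with
      | zero => simp only [TensorProduct.zero_tmul, map_zero]
      | add a b ha hb => simp only [TensorProduct.add_tmul, map_add, ha, hb]
      | tmul m h' => simp [smul_smul, mul_comm]
  rw [← slice_rTensor, ← hassoc, ← M.coassoc]
  simp only [slice, LinearMap.comp_apply, ← LinearMap.lTensor_comp_apply, LinearMap.comp_assoc]

lemma slice_mul_slice (M : Comod K H) {p : V → Module.End K M.carrier}
    {u : A → Module.End K M.carrier} (hg : ∀ v, IsGrouplike K H (g v))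
    (hx : ∀ e, x e ∈ skewPrim K H (g (s e)) (g (t e))) (hρ : M.ρ = arrowCoaction g x p u)
    (α β : H →ₗ[K] K) :
    ((slice M.carrier α ∘ₗ M.ρ) * (slice M.carrier β ∘ₗ M.ρ) : Module.End K M.carrier) =
      ∑ v, (α (g v) * β (g v)) • p v +
        ∑ e, (α (g (s e)) * β (x e) + α (x e) * β (g (t e))) • u e := by
  ext m
  refine (M.slice_slice α β m).trans ?_
  rw [hρ, slice_arrowCoaction]
  simp [(hg _).2, (mem_skewPrim K H).1 (hx _)]

end Comod

end ArrowComodules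

section DualAction

lemma exists_dual_of_linearIndependent {K H ι : Type*} [Field K] [AddCommGroup H] [Module K H]
    [DecidableEq ι] {b : ι → H} (hb : LinearIndependent K b) :
    ∃ ζ : ι → H →ₗ[K] K, ∀ i j, ζ i (b j) = if j = i then 1 else 0 := by
  choose ζ hζ using fun i => LinearMap.exists_extend (Finsupp.lapply i ∘ₗ hb.repr)
  refine ⟨ζ, fun i j => ?_⟩
  have hij := LinearMap.congr_fun (hζ i) ⟨b j, Submodule.subset_span ⟨j, rfl⟩⟩
  rw [LinearMap.comp_apply, LinearMap.comp_apply, hb.repr_eq_single j _ rfl] at hij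
  rw [← Finsupp.single_apply]
  exact hij

lemma eq_sum_dual_smul {K H ι : Type*} [Field K] [AddCommGroup H] [Module K H] [Fintype ι]
    [DecidableEq ι] {b : ι → H} {ζ : ι → H →ₗ[K] K}
    (hζ : ∀ i j, ζ i (b j) = if j = i then 1 else 0) {h : H}
    (hh : h ∈ Submodule.span K (Set.range b)) : h = ∑ i, ζ i h • b i := by
  have heq : Set.EqOn (LinearMap.id : H →ₗ[K] H)
      (∑ i, LinearMap.toSpanSingleton K H (b i) ∘ₗ ζ i : H →ₗ[K] H) (Set.range b) := by
    rintro _ ⟨j, rfl⟩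
    simp [hζ]
  simpa using LinearMap.eqOn_span heq hh

variable {K : Type} [Field K] {H : Type} [AddCommGroup H] [Module K H] [Coalgebra K H]
  {V A : Type*} [Fintype V] [Fintype A] {s t : A → V} {g : V → H} {x : A → H}

theorem CoactsThrough.exists_action {M : Comod K H}
    (hM : CoactsThrough K H M (Submodule.span K (Set.range g ∪ Set.range x)))
    (hg : ∀ v, IsGrouplike K H (g v)) (hx : ∀ e, x e ∈ skewPrim K H (g (s e)) (g (t e)))
    (hli : LinearIndependent K (Sum.elim g x)) :
    ∃ p u, IsRadSqZeroAction s t p u ∧ M.ρ = arrowCoaction g x p u := by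
  classical
  obtain ⟨ζ, hζ⟩ := exists_dual_of_linearIndependent hli
  set p : V → Module.End K M.carrier := fun v => slice M.carrier (ζ (Sum.inl v)) ∘ₗ M.ρ
  set u : A → Module.End K M.carrier := fun e => slice M.carrier (ζ (Sum.inr e)) ∘ₗ M.ρ
  have hρ (m) : M.ρ m = arrowCoaction g x p u m := by
    rw [arrowCoaction_apply]
    refine (eq_sum_slice_tmul (ζ := ζ) (b := Sum.elim g x) (fun h hh => ?_) (hM m)).trans
      (Fintype.sum_sum_type _)
    exact eq_sum_dual_smul hζ (by rwa [Set.Sum.elim_range])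
  have hmul := M.slice_mul_slice hg hx (LinearMap.ext hρ)
  have hγg (v w) : ζ (Sum.inl v) (g w) = if w = v then 1 else 0 := by
    simpa using hζ (Sum.inl v) (Sum.inl w)
  have hγx (v e) : ζ (Sum.inl v) (x e) = 0 := by simpa using hζ (Sum.inl v) (Sum.inr e)
  have hξg (e v) : ζ (Sum.inr e) (g v) = 0 := by simpa using hζ (Sum.inr e) (Sum.inl v)
  have hξx (e f) : ζ (Sum.inr e) (x f) = if f = e then 1 else 0 := by
    simpa using hζ (Sum.inr e) (Sum.inr f)
  refine ⟨p, u, ⟨⟨⟨fun v => ?_, fun v w hvw => ?_⟩, LinearMap.ext fun m => ?_⟩, fun e => ?_,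
    fun e => ?_, fun e f => ?_⟩, LinearMap.ext hρ⟩
  · exact (hmul _ _).trans (by simp [hγg, hγx])
  · exact (hmul _ _).trans (by simp [hγg, hγx, hvw.symm])
  · have hcounit : slice M.carrier Coalgebra.counit (M.ρ m) = m := M.counit_comp m
    rw [hρ, slice_arrowCoaction] at hcounit
    simpa [(hg _).1, counit_eq_zero_of_mem_skewPrim (hg _) (hg _) (hx _)] using hcounit
  · exact (hmul _ _).trans (by simp [hγg, hγx, hξg, hξx])
  · refine (hmul _ _).trans ?_
    simp only [hγg, hγx, hξg, hξx, mul_zero, zero_mul, zero_add, ite_mul, one_mul, zero_smul,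
      ite_smul, Finset.sum_const_zero, Finset.sum_ite_eq', Finset.mem_univ, if_true, one_smul]
  · exact (hmul _ _).trans (by simp [hξg])

end DualAction

section DimensionVectors

variable {K : Type} [Field K] {H : Type} [AddCommGroup H] [Module K H]

lemma tmul_mem_range_rTensor_subtype {M : Type*} [AddCommGroup M] [Module K M] {N : Submodule K M}
    {m : M} (hm : m ∈ N) (h : H) :
    m ⊗ₜ[K] h ∈ LinearMap.range (LinearMap.rTensor H N.subtype) :=
  ⟨⟨m, hm⟩ ⊗ₜ h, rfl⟩

lemma range_rTensor_subtype_mono {M : Type*} [AddCommGroup M] [Module K M] {N N' : Submodule K M}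
    (h : N ≤ N') : LinearMap.range (LinearMap.rTensor H N.subtype) ≤
      LinearMap.range (LinearMap.rTensor H N'.subtype) := by
  rw [← Submodule.subtype_comp_inclusion N N' h, LinearMap.rTensor_comp]
  exact LinearMap.range_comp_le_range _ _

variable [Coalgebra K H] {M : Comod K H}

namespace Comod

lemma isSubcomod_flag {k : ℕ} (b : Module.Basis (Fin k) K M.carrier) {γ : Fin k → H}
    (hb : ∀ i, M.ρ (b i) - b i ⊗ₜ[K] γ i ∈
      LinearMap.range (LinearMap.rTensor H (b.flag i.castSucc).subtype)) (i : Fin (k + 1)) :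
    IsSubcomod K H M (b.flag i) := by
  have hle : b.flag i ≤ Submodule.comap M.ρ
      (LinearMap.range (LinearMap.rTensor H (b.flag i).subtype)) := by
    refine b.flag_le_iff.2 fun j hj => ?_
    rw [Submodule.mem_comap, ← sub_add_cancel (M.ρ (b j)) (b j ⊗ₜ[K] γ j)]
    exact add_mem (range_rTensor_subtype_mono (b.flag_mono hj.le) (hb j))
      (tmul_mem_range_rTensor_subtype (b.self_mem_flag hj) _)
  exact fun m hm => hle hm

lemma hasDimVector_of_flag {k : ℕ} (b : Module.Basis (Fin k) K M.carrier) {γ : Fin k → H}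
    (hγ : ∀ i, IsGrouplike K H (γ i))
    (hb : ∀ i, M.ρ (b i) - b i ⊗ₜ[K] γ i ∈
      LinearMap.range (LinearMap.rTensor H (b.flag i.castSucc).subtype)) :
    HasDimVector K H M fun h => Nat.card {i // γ i = h} := by
  refine ⟨k, b.flag, γ, b.flag_zero, b.flag_last, fun i => b.flag_mono i.castSucc_lt_succ.le,
    isSubcomod_flag b hb, hγ, fun i => ⟨b i, ?_, ?_, ?_⟩, fun i => ?_, fun h => rfl⟩
  · exact b.self_mem_flag i.castSucc_lt_succ
  · exact b.self_mem_flag_iff.not.2 (lt_irrefl _)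
  · rw [b.flag_succ, sup_comm]
  · have hle : b.flag i.succ ≤ Submodule.comap (M.ρ - (TensorProduct.mk K M.carrier H).flip (γ i))
        (LinearMap.range (LinearMap.rTensor H (b.flag i.castSucc).subtype)) := by
      rw [b.flag_succ, sup_le_iff, Submodule.span_singleton_le_iff_mem]
      exact ⟨hb i, fun m hm => sub_mem (isSubcomod_flag b hb _ m hm)
        (tmul_mem_range_rTensor_subtype hm _)⟩
    exact fun m hm => hle hm

theorem hasDimVector_of_basis {B : Type*} [Finite B] (b : Module.Basis B K M.carrier) {γ : B → H}
    (hγ : ∀ i, IsGrouplike K H (γ i)) (level : B → ℕ)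
    (hb : ∀ i, M.ρ (b i) - b i ⊗ₜ[K] γ i ∈ LinearMap.range
      (LinearMap.rTensor H (Submodule.span K (b '' {j | level j < level i})).subtype)) :
    HasDimVector K H M fun h => Nat.card {i // γ i = h} := by
  cases nonempty_fintype B
  let enum := (Fintype.equivFin B).symm
  let E : Fin (Fintype.card B) ≃ B := (Tuple.sort (level ∘ enum)).trans enum
  have hE : Monotone (level ∘ E) := Tuple.monotone_sort (level ∘ enum)
  have hdim := hasDimVector_of_flag (b.reindex E.symm) (γ := γ ∘ E) (fun i => hγ (E i)) fun i => by
    rw [Module.Basis.reindex_apply, Equiv.symm_symm]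
    refine range_rTensor_subtype_mono (Submodule.span_le.2 ?_) (hb (E i))
    rintro _ ⟨j, hj, rfl⟩
    rw [← E.apply_symm_apply j, ← E.symm_symm, ← Module.Basis.reindex_apply]
    refine Module.Basis.self_mem_flag _ (Fin.castSucc_lt_castSucc_iff.2 ?_)
    exact hE.reflect_lt (by simpa using hj)
  have hcard (h : H) : Nat.card {i // γ i = h} = Nat.card {i // (γ ∘ E) i = h} :=
    (Nat.card_congr (E.subtypeEquiv fun _ => Iff.rfl)).symm
  rwa [funext hcard]

end Comod

end DimensionVectors

section SeparatedReps

variable {K : Type} [Field K] {V : Type} {A : Type*} {s t : A → V}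
  {X Y : V ⊕ V → Type} [∀ w, AddCommGroup (X w)] [∀ w, Module K (X w)]
  [∀ w, AddCommGroup (Y w)] [∀ w, Module K (Y w)]

/-- The representations of the separated quiver, in which an arrow from `s e` to `t e` becomes an
arrow from the second copy of `t e` to the first copy of `s e`. The reversal reflects that the dual
functional of an arrow of a right comodule maps the summand at `t e` to the one at `s e`. -/
abbrev SeparatedRep (K : Type*) [Semiring K] (s t : A → V) (X : V ⊕ V → Type*)
    [∀ w, AddCommMonoid (X w)] [∀ w, Module K (X w)] :=
  QuiverRep K (fun e => Sum.inr (t e)) (fun e => Sum.inl (s e)) X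

/-- The vertex of a quiver to which a vertex of its separated quiver belongs. -/
def foldVertex (w : V ⊕ V) : V :=
  Sum.elim id id w

namespace SeparatedRep

variable [DecidableEq V]

variable (K X) in
/-- The projection of the total space of a representation to the two summands at `v`. -/
def vertexEnd (v : V) : Module.End K (∀ w, X w) :=
  LinearMap.pi fun w => if foldVertex w = v then LinearMap.proj w else 0

/-- The arrow `e` of a representation, as an endomorphism of the total space. -/
def arrowEnd (φ : SeparatedRep K s t X) (e : A) : Module.End K (∀ w, X w) :=
  LinearMap.single K X (Sum.inl (s e)) ∘ₗ φ e ∘ₗ LinearMap.proj (Sum.inr (t e))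

lemma vertexEnd_apply (v : V) (m : ∀ w, X w) (w : V ⊕ V) :
    vertexEnd K X v m w = if foldVertex w = v then m w else 0 := by
  rw [vertexEnd, LinearMap.pi_apply, DFunLike.ite_apply, LinearMap.proj_apply,
    LinearMap.zero_apply]

lemma arrowEnd_apply (φ : SeparatedRep K s t X) (e : A) (m : ∀ w, X w) :
    arrowEnd φ e m = Pi.single (Sum.inl (s e)) (φ e (m (Sum.inr (t e)))) :=
  rfl

lemma arrowEnd_eq_zero (φ : SeparatedRep K s t X) (e : A) {m : ∀ w, X w}
    (hm : m (Sum.inr (t e)) = 0) : arrowEnd φ e m = 0 := by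
  rw [arrowEnd_apply, hm, map_zero, Pi.single_zero]

lemma vertexEnd_single (v : V) (w : V ⊕ V) (y : X w) :
    vertexEnd K X v (Pi.single w y) = if foldVertex w = v then Pi.single w y else 0 := by
  funext w'
  rw [vertexEnd_apply]
  obtain rfl | hw := eq_or_ne w' w
  · split_ifs <;> rfl
  · rw [Pi.single_eq_of_ne hw, ite_self]
    split_ifs
    exacts [(Pi.single_eq_of_ne hw y).symm, rfl]

variable [Fintype V]

lemma isRadSqZeroAction (φ : SeparatedRep K s t X) :
    IsRadSqZeroAction s t (vertexEnd K X) (arrowEnd φ) := by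
  refine ⟨⟨⟨fun v => ?_, fun v v' hv => ?_⟩, ?_⟩, fun e => ?_, fun e => ?_, fun e f => ?_⟩ <;>
    refine LinearMap.ext fun m => ?_
  · funext w
    simp only [Module.End.mul_apply, vertexEnd_apply]
    split_ifs <;> rfl
  · funext w
    simp only [Module.End.mul_apply, vertexEnd_apply]
    split_ifs with h h'
    exacts [absurd (h.symm.trans h') hv, rfl, rfl]
  · funext w
    simp [LinearMap.sum_apply, vertexEnd_apply]
  · exact (vertexEnd_single _ _ _).trans (if_pos rfl)
  · rw [Module.End.mul_apply, arrowEnd_apply, vertexEnd_apply, if_pos (by rfl), arrowEnd_apply]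
  · refine arrowEnd_eq_zero φ e ?_
    rw [arrowEnd_apply, Pi.single_eq_of_ne Sum.inr_ne_inl]

end SeparatedRep

variable [DecidableEq V] [Fintype V] [Fintype A] {H : Type} [AddCommGroup H] [Module K H]
  [Coalgebra K H] {g : V → H} {x : A → H}

/-- The comodule over `KQ₁` corresponding to a representation of the separated quiver of `Q`. -/
noncomputable def Comod.ofRep (hg : ∀ v, IsGrouplike K H (g v))
    (hx : ∀ e, x e ∈ skewPrim K H (g (s e)) (g (t e))) (φ : SeparatedRep K s t X) : Comod K H :=
  Comod.ofAction hg hx (SeparatedRep.isRadSqZeroAction φ)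

variable {hg : ∀ v, IsGrouplike K H (g v)} {hx : ∀ e, x e ∈ skewPrim K H (g (s e)) (g (t e))}

lemma Comod.isFiniteOver_ofRep [∀ w, Module.Finite K (X w)] (φ : SeparatedRep K s t X) :
    (Comod.ofRep hg hx φ).IsFiniteOver K H (Submodule.span K (Set.range g ∪ Set.range x)) :=
  ⟨inferInstanceAs (Module.Finite K (∀ w, X w)), fun m => arrowCoaction_mem_range_lTensor m⟩

lemma Comod.finrank_ofRep [∀ w, Module.Finite K (X w)] (φ : SeparatedRep K s t X) :
    Module.finrank K (Comod.ofRep hg hx φ).carrier = ∑ w, Module.finrank K (X w) :=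
  Module.finrank_pi_fintype K

/-- The comodule morphism induced by a morphism of representations. -/
noncomputable def ComodHom.ofIsHom {φ : SeparatedRep K s t X} {χ : SeparatedRep K s t Y}
    {f : ∀ w, X w →ₗ[K] Y w} (hf : QuiverRep.IsHom φ χ f) :
    ComodHom K H (Comod.ofRep hg hx φ) (Comod.ofRep hg hx χ) where
  toLin := LinearMap.pi fun w => f w ∘ₗ LinearMap.proj w
  compat m := by
    refine arrowCoaction_map (LinearMap.pi fun w => f w ∘ₗ LinearMap.proj w)
      (fun v (m : ∀ w, X w) => funext fun w => ?_) (fun e (m : ∀ w, X w) => funext fun w => ?_) m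
    · simp only [LinearMap.pi_apply, LinearMap.comp_apply, LinearMap.proj_apply,
        SeparatedRep.vertexEnd_apply, apply_ite (f w), map_zero]
    · simp only [LinearMap.pi_apply, LinearMap.comp_apply, LinearMap.proj_apply,
        SeparatedRep.arrowEnd_apply, hf e, Pi.apply_single (fun w => f w) fun w => map_zero (f w)]

lemma Comod.isIndecomposable_of_indec_ofRep {φ : SeparatedRep K s t X}
    (h : (Comod.ofRep hg hx φ).Indec K H) : QuiverRep.IsIndecomposable φ := by
  obtain ⟨⟨m, hm⟩, hidem⟩ := h
  obtain ⟨w, hw⟩ := Function.ne_iff.1 hm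
  refine ⟨⟨w, nontrivial_of_ne _ _ hw⟩, fun f hf hff => ?_⟩
  have hsingle (w : V ⊕ V) (y : X w) :
      (ComodHom.ofIsHom (hg := hg) (hx := hx) hf).toLin (Pi.single w y) w = f w y :=
    congrArg (f w) (Pi.single_eq_same w y)
  refine (hidem (ComodHom.ofIsHom hf) <| LinearMap.ext fun m => funext fun w =>
    LinearMap.congr_fun (congrFun hff w) (m w)).imp (fun h0 => ?_) fun h1 => ?_
  · refine funext fun w => LinearMap.ext fun y => ?_
    rw [← hsingle, h0]
    rfl
  · refine funext fun w => LinearMap.ext fun y => ?_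
    rw [← hsingle, h1]
    exact Pi.single_eq_same w y

end SeparatedReps

section NormalForm

lemma exists_retract_of_isIdempotentElem {K M : Type*} [Field K] [AddCommGroup M] [Module K M]
    [Module.Finite K M] {P : Module.End K M} (hP : IsIdempotentElem P) :
    ∃ (n : ℕ) (ι : (Fin n → K) →ₗ[K] M) (r : M →ₗ[K] Fin n → K),
      (∀ y, r (ι y) = y) ∧ ∀ m, ι (r m) = P m := by
  let e := (Module.finBasis K (LinearMap.range P)).equivFun
  refine ⟨_, (LinearMap.range P).subtype ∘ₗ e.symm.toLinearMap, e.toLinearMap ∘ₗ P.rangeRestrict,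
    fun y => ?_, fun m => ?_⟩
  · obtain ⟨z, rfl⟩ := e.surjective y
    obtain ⟨m, hm⟩ := z.2
    have hz : P.rangeRestrict z = z := Subtype.ext (hm ▸ LinearMap.congr_fun hP m)
    simpa using congrArg e hz
  · simp

section Retracts

variable {K M W : Type*} [Ring K] [AddCommGroup M] [Module K M]
  {X : W → Type*} [∀ w, AddCommGroup (X w)] [∀ w, Module K (X w)] {P : W → Module.End K M}
  {ι : ∀ w, X w →ₗ[K] M} {r : ∀ w, M →ₗ[K] X w}

lemma retract_comp_idempotent (hrι : ∀ w y, r w (ι w y) = y) (hιr : ∀ w m, ι w (r w m) = P w m)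
    (w : W) (m : M) : r w (P w m) = r w m := by
  rw [← hιr, hrι]

lemma bijective_pi_retract [Fintype W] (hP : CompleteOrthogonalIdempotents P)
    (hrι : ∀ w y, r w (ι w y) = y) (hιr : ∀ w m, ι w (r w m) = P w m) :
    Function.Bijective (LinearMap.pi r) := by
  classical
  have hsum (m : M) : ∑ w, P w m = m := by
    rw [← LinearMap.sum_apply, hP.complete, Module.End.one_apply]
  refine ⟨(injective_iff_map_eq_zero _).2 fun m hm => ?_, fun y => ⟨∑ w, ι w (y w), ?_⟩⟩
  · rw [← hsum m]
    refine Finset.sum_eq_zero fun w _ => ?_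
    rw [← hιr, show r w m = 0 from congrFun hm w, map_zero]
  · have horth {w w' : W} (hw : w' ≠ w) (z : X w') : r w (ι w' z) = 0 := by
      rw [← retract_comp_idempotent hrι hιr, ← hrι w' z, hιr w', ← Module.End.mul_apply,
        hP.ortho hw.symm, LinearMap.zero_apply, map_zero]
    funext w
    rw [LinearMap.pi_apply, map_sum, Finset.sum_eq_single w (fun w' _ hw => horth hw _) (by simp),
      hrι]

end Retracts

variable {K : Type} [Field K] {V : Type} {A : Type*} [Fintype V] [DecidableEq V] {s t : A → V}

lemma separated_mul_vertex {R : Type*} [Semiring R] {P : V ⊕ V → R} {p : V → R}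
    (hP : CompleteOrthogonalIdempotents P) (hPp : ∀ v, P (Sum.inl v) + P (Sum.inr v) = p v)
    (w : V ⊕ V) (v : V) : P w * p v = if foldVertex w = v then P w else 0 := by
  rw [← hPp, mul_add, hP.mul_eq, hP.mul_eq]
  rcases w with w | w <;> by_cases hw : w = v <;> simp [foldVertex, hw]

lemma exists_intertwining_retract {M : Type} [AddCommGroup M] [Module K M]
    {X : V ⊕ V → Type} [∀ w, AddCommGroup (X w)] [∀ w, Module K (X w)] {p : V → Module.End K M}
    {u : A → Module.End K M} {P : V ⊕ V → Module.End K M} (hP : CompleteOrthogonalIdempotents P)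
    (hPp : ∀ v, P (Sum.inl v) + P (Sum.inr v) = p v)
    (hPu : ∀ e, P (Sum.inl (s e)) * u e = u e ∧ u e * P (Sum.inr (t e)) = u e)
    {ι : ∀ w, X w →ₗ[K] M} {r : ∀ w, M →ₗ[K] X w} (hrι : ∀ w y, r w (ι w y) = y)
    (hιr : ∀ w m, ι w (r w m) = P w m) :
    ∃ φ : SeparatedRep K s t X,
      (∀ v m, SeparatedRep.vertexEnd K X v (LinearMap.pi r m) = LinearMap.pi r (p v m)) ∧
        ∀ e m, SeparatedRep.arrowEnd φ e (LinearMap.pi r m) = LinearMap.pi r (u e m) := by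
  have hrP := retract_comp_idempotent hrι hιr
  refine ⟨fun e => r (Sum.inl (s e)) ∘ₗ u e ∘ₗ ι (Sum.inr (t e)), fun v m => funext fun w => ?_,
    fun e m => funext fun w => ?_⟩
  · rw [SeparatedRep.vertexEnd_apply, LinearMap.pi_apply, LinearMap.pi_apply, ← hrP w (p v m),
      ← Module.End.mul_apply, separated_mul_vertex hP hPp, DFunLike.ite_apply, apply_ite (r w), hrP,
      LinearMap.zero_apply, map_zero]
  · have hu : u e (ι (Sum.inr (t e)) (r (Sum.inr (t e)) m)) = u e m := by
      rw [hιr, ← Module.End.mul_apply, (hPu e).2]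
    rw [SeparatedRep.arrowEnd_apply, LinearMap.pi_apply, LinearMap.comp_apply,
      LinearMap.comp_apply, LinearMap.pi_apply, hu]
    obtain rfl | hw := eq_or_ne w (Sum.inl (s e))
    · rw [Pi.single_eq_same]
    · rw [Pi.single_eq_of_ne hw, ← (hPu e).1, ← hrP, ← Module.End.mul_apply, ← mul_assoc,
        hP.ortho hw, zero_mul, LinearMap.zero_apply, map_zero]

variable [Fintype A] {H : Type} [AddCommGroup H] [Module K H] [Coalgebra K H] {g : V → H}
  {x : A → H}

theorem Comod.exists_comodIso_ofRep (hg : ∀ v, IsGrouplike K H (g v))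
    (hx : ∀ e, x e ∈ skewPrim K H (g (s e)) (g (t e)))
    (hli : LinearIndependent K (Sum.elim g x)) {M : Comod K H}
    (hM : M.IsFiniteOver K H (Submodule.span K (Set.range g ∪ Set.range x))) :
    ∃ (d : V ⊕ V → ℕ) (φ : SeparatedRep K s t fun w => Fin (d w) → K),
      ComodIso K H M (Comod.ofRep hg hx φ) := by
  obtain ⟨hfin, hcoacts⟩ := hM
  obtain ⟨p, u, hpu, hρ⟩ := hcoacts.exists_action hg hx hli
  obtain ⟨P, hP, hPp, hPu⟩ := hpu.exists_separated
  choose d ι r hrι hιr using fun w => exists_retract_of_isIdempotentElem (hP.idem w)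
  obtain ⟨φ, hp, hu⟩ := exists_intertwining_retract hP hPp hPu hrι hιr
  refine ⟨d, φ, ⟨LinearMap.pi r, fun m => ?_⟩, bijective_pi_retract hP hrι hιr⟩
  rw [hρ]
  exact arrowCoaction_map (LinearMap.pi r) hp hu m

end NormalForm

section RepComodules

variable {K : Type} [Field K] {V : Type} {A : Type*} [Fintype V] [DecidableEq V] [Fintype A]
  {s t : A → V} {H : Type} [AddCommGroup H] [Module K H] {g : V → H} {x : A → H}

lemma arrowCoaction_single_sub {X : V ⊕ V → Type} [∀ w, AddCommGroup (X w)] [∀ w, Module K (X w)]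
    (φ : SeparatedRep K s t X) (w : V ⊕ V) (y : X w) :
    arrowCoaction g x (SeparatedRep.vertexEnd K X) (SeparatedRep.arrowEnd φ) (Pi.single w y) -
        Pi.single w y ⊗ₜ[K] g (foldVertex w) =
      ∑ e, SeparatedRep.arrowEnd φ e (Pi.single w y) ⊗ₜ[K] x e := by
  refine sub_eq_of_eq_add' ((arrowCoaction_apply _).trans ?_)
  simp only [SeparatedRep.vertexEnd_single, TensorProduct.ite_tmul, Finset.sum_ite_eq,
    Finset.mem_univ, if_true]

variable [Coalgebra K H] {hg : ∀ v, IsGrouplike K H (g v)}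
  {hx : ∀ e, x e ∈ skewPrim K H (g (s e)) (g (t e))}

section Morphisms

variable {X Y : V ⊕ V → Type} [∀ w, AddCommGroup (X w)] [∀ w, Module K (X w)]
  [∀ w, AddCommGroup (Y w)] [∀ w, Module K (Y w)] {φ : SeparatedRep K s t X}
  {χ : SeparatedRep K s t Y}

lemma ComodHom.map_arrowEnd (hli : LinearIndependent K (Sum.elim g x))
    (f : ComodHom K H (Comod.ofRep hg hx φ) (Comod.ofRep hg hx χ)) (e : A) (m : ∀ w, X w) :
    f.toLin (SeparatedRep.arrowEnd φ e m) = SeparatedRep.arrowEnd χ e (f.toLin m) := by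
  classical
  obtain ⟨ζ, hζ⟩ := exists_dual_of_linearIndependent hli
  have hslice {Z : V ⊕ V → Type} [∀ w, AddCommGroup (Z w)] [∀ w, Module K (Z w)]
      (ω : SeparatedRep K s t Z) (m : ∀ w, Z w) :
      slice _ (ζ (Sum.inr e)) ((Comod.ofRep hg hx ω).ρ m) = SeparatedRep.arrowEnd ω e m := by
    refine (slice_arrowCoaction _ _).trans ?_
    have hvertex v : ζ (Sum.inr e) (g v) = 0 := by simpa using hζ (Sum.inr e) (Sum.inl v)
    have harrow e' : ζ (Sum.inr e) (x e') = if e' = e then 1 else 0 := by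
      simpa using hζ (Sum.inr e) (Sum.inr e')
    simp only [hvertex, harrow, zero_smul, ite_smul, one_smul, Finset.sum_const_zero,
      Finset.sum_ite_eq', Finset.mem_univ, if_true, zero_add]
    rfl
  exact (congrArg f.toLin (hslice φ m).symm).trans
    ((f.map_slice _ m).trans (hslice χ (f.toLin m)))

lemma ComodIso.exists_eq_comp_comp (hli : LinearIndependent K (Sum.elim g x))
    (h : ComodIso K H (Comod.ofRep hg hx φ) (Comod.ofRep hg hx χ)) :
    ∃ (a : ∀ v, X (Sum.inl v) →ₗ[K] Y (Sum.inl v)) (b : ∀ v, Y (Sum.inr v) →ₗ[K] X (Sum.inr v)),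
      ∀ e, χ e = a (s e) ∘ₗ φ e ∘ₗ b (t e) := by
  obtain ⟨f, hf⟩ := h
  let F : (∀ w, X w) ≃ₗ[K] ∀ w, Y w := LinearEquiv.ofBijective f.toLin hf
  refine ⟨fun v => LinearMap.proj (Sum.inl v) ∘ₗ F ∘ₗ LinearMap.single K X (Sum.inl v),
    fun v => LinearMap.proj (Sum.inr v) ∘ₗ F.symm ∘ₗ LinearMap.single K Y (Sum.inr v),
    fun e => LinearMap.ext fun y => ?_⟩
  let m : ∀ w, X w := F.symm (Pi.single (Sum.inr (t e)) y)
  have hm : f.toLin (SeparatedRep.arrowEnd φ e m) =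
      SeparatedRep.arrowEnd χ e (Pi.single (Sum.inr (t e)) y) := by
    rw [f.map_arrowEnd hli]
    exact congrArg _ (F.apply_symm_apply _)
  calc χ e y = SeparatedRep.arrowEnd χ e (Pi.single (Sum.inr (t e)) y) (Sum.inl (s e)) := by
        rw [SeparatedRep.arrowEnd_apply, Pi.single_eq_same, Pi.single_eq_same]
    _ = F (SeparatedRep.arrowEnd φ e m) (Sum.inl (s e)) := (congrFun hm _).symm

end Morphisms

theorem Comod.hasDimVector_ofRep {d : V ⊕ V → ℕ}
    (φ : SeparatedRep K s t fun w => Fin (d w) → K) :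
    HasDimVector K H (ofRep hg hx φ) fun h =>
      Nat.card {i : Σ w, Fin (d w) // g (foldVertex i.1) = h} := by
  let b : Module.Basis (Σ w, Fin (d w)) K (∀ w, Fin (d w) → K) :=
    Pi.basis fun w => Pi.basisFun K (Fin (d w))
  let level (i : Σ w, Fin (d w)) : ℕ := Sum.elim (fun _ => 0) (fun _ => 1) i.1
  refine hasDimVector_of_basis (M := ofRep hg hx φ) b (fun _ => hg _) level fun ⟨w, a⟩ => ?_
  have hb : b ⟨w, a⟩ = Pi.single w (Pi.basisFun K (Fin (d w)) a) := Pi.basis_apply _ _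
  have hρ : arrowCoaction g x (SeparatedRep.vertexEnd K _) (SeparatedRep.arrowEnd φ) (b ⟨w, a⟩) -
      b ⟨w, a⟩ ⊗ₜ[K] g (foldVertex w) = ∑ e, SeparatedRep.arrowEnd φ e (b ⟨w, a⟩) ⊗ₜ[K] x e := by
    rw [hb]
    exact arrowCoaction_single_sub φ w _
  refine Eq.substr (p := (· ∈ LinearMap.range _)) hρ <|
    sum_mem fun e _ => tmul_mem_range_rTensor_subtype ?_ _
  rcases w with v | v
  · rw [SeparatedRep.arrowEnd_eq_zero φ e]
    · exact zero_mem _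
    · rw [hb, Pi.single_eq_of_ne Sum.inr_ne_inl]
  · refine b.mem_span_image.2 fun ⟨w, a'⟩ hw => ?_
    rw [Finset.mem_coe, Finsupp.mem_support_iff, Pi.basis_repr, SeparatedRep.arrowEnd_apply] at hw
    obtain rfl : w = Sum.inl (s e) := by
      by_contra hne
      rw [Pi.single_eq_of_ne hne] at hw
      simp at hw
    exact Nat.zero_lt_one

end RepComodules
section CorepresentationType

variable {K : Type} [Field K] {V : Type} {A : Type*} {s t : A → V}
  {H : Type} [AddCommGroup H] [Module K H] [Coalgebra K H] {g : V → H} {x : A → H}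

namespace DiscreteCorepType

lemma finiteUpTo_indec_ofRep [Fintype V] [DecidableEq V] [Fintype A]
    (hdisc : DiscreteCorepType K H) (hg : ∀ v, IsGrouplike K H (g v))
    (hx : ∀ e, x e ∈ skewPrim K H (g (s e)) (g (t e))) (d : V ⊕ V → ℕ) :
    FiniteUpTo (comodSetoid K H) fun M => M.Indec K H ∧
      ∃ φ : SeparatedRep K s t fun w => Fin (d w) → K, ComodIso K H M (Comod.ofRep hg hx φ) := by
  obtain ⟨N, R, hR⟩ :=
    hdisc fun h => Nat.card {i : Σ w, Fin (d w) // g (foldVertex i.1) = h}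
  refine FiniteUpTo.of_fin R fun M ⟨hM, φ, hMφ⟩ => ?_
  obtain ⟨i, hi⟩ := hR _ (hMφ.indec hM) (Comod.hasDimVector_ofRep φ)
  exact ⟨i, (comodSetoid K H).trans hMφ hi⟩

lemma finiteUpTo_indec_finrank_eq [Finite V] [Finite A]
    (hdisc : DiscreteCorepType K H) (hg : ∀ v, IsGrouplike K H (g v))
    (hx : ∀ e, x e ∈ skewPrim K H (g (s e)) (g (t e)))
    (hli : LinearIndependent K (Sum.elim g x)) (n : ℕ) :
    FiniteUpTo (comodSetoid K H) fun M => M.Indec K H ∧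
      M.IsFiniteOver K H (Submodule.span K (Set.range g ∪ Set.range x)) ∧
      Module.finrank K M.carrier = n := by
  classical
  cases nonempty_fintype V
  cases nonempty_fintype A
  refine FiniteUpTo.of_exists_mem (T := Set.Iic fun _ : V ⊕ V => n) (Set.finite_Iic _)
    (fun d _ => hdisc.finiteUpTo_indec_ofRep hg hx d) fun M ⟨hM, hMD, hMn⟩ => ?_
  obtain ⟨d, φ, hMφ⟩ := Comod.exists_comodIso_ofRep hg hx hli hMD
  refine ⟨d, fun w => ?_, hM, φ, hMφ⟩
  obtain ⟨f, hf⟩ := hMφ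
  calc d w ≤ ∑ w, d w := Finset.single_le_sum (fun _ _ => Nat.zero_le _) (Finset.mem_univ w)
    _ = Module.finrank K (Comod.ofRep hg hx φ).carrier := by
      simp only [Comod.finrank_ofRep, Module.finrank_fin_fun]
    _ = n := (LinearEquiv.ofBijective f.toLin hf).finrank_eq.symm.trans hMn

lemma exists_finite_representatives [Fintype V] [DecidableEq V] [Fintype A]
    (hdisc : DiscreteCorepType K H) (hg : ∀ v, IsGrouplike K H (g v))
    (hx : ∀ e, x e ∈ skewPrim K H (g (s e)) (g (t e)))
    (hli : LinearIndependent K (Sum.elim g x)) (d : V ⊕ V → ℕ) :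
    FiniteUpTo ((comodSetoid K H).comap (Comod.ofRep hg hx))
      fun _ : SeparatedRep K s t fun w => Fin (d w) → K => True :=
  (Comod.finiteUpTo_finrank_lt (hdisc.finiteUpTo_indec_finrank_eq hg hx hli)
    (∑ w, d w + 1)).of_reflects (Comod.ofRep hg hx)
    (fun φ _ => ⟨Comod.isFiniteOver_ofRep φ, by
      simp only [Comod.finrank_ofRep, Module.finrank_fin_fun, Nat.lt_succ_self]⟩)
    fun _ _ h => h

theorem separatedTitsForm_posDef [Infinite K] [Fintype V] [Fintype A]
    (hdisc : DiscreteCorepType K H) (hg : ∀ v, IsGrouplike K H (g v))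
    (hx : ∀ e, x e ∈ skewPrim K H (g (s e)) (g (t e)))
    (hli : LinearIndependent K (Sum.elim g x)) : (separatedTitsForm s t).PosDef := by
  classical
  refine titsForm_posDef_of_nat fun d hd => ?_
  obtain ⟨Φ, hΦ, hcover⟩ := hdisc.exists_finite_representatives hg hx hli d
  have hlt := sum_card_mul_card_lt_of_finite_orbits (K := K)
    (I := fun v => Fin (d (Sum.inl v))) (J := fun v => Fin (d (Sum.inr v))) (s := s) (t := t) ?_
    (hΦ.image fun φ e => LinearMap.toMatrix' (φ e)) fun φ' => ?_
  · simp only [Fintype.card_fin] at hlt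
    rw [titsForm_apply, Fintype.sum_sum_type, sub_pos]
    simp only [mul_comm (d (Sum.inl _))] at hlt
    exact_mod_cast hlt
  · obtain ⟨w, hw⟩ := Function.ne_iff.1 hd
    simp only [Fintype.card_fin, ← Fintype.sum_sum_type fun w => d w ^ 2]
    exact Finset.sum_pos' (fun _ _ => Nat.zero_le _)
      ⟨w, Finset.mem_univ w, pow_pos (Nat.pos_of_ne_zero hw) 2⟩
  · obtain ⟨φ, hφ, hiso⟩ := hcover (fun e => Matrix.toLin' (φ' e)) trivial
    obtain ⟨a, b, hab⟩ := ComodIso.exists_eq_comp_comp hli ((comodSetoid K H).symm hiso)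
    refine ⟨_, Set.mem_image_of_mem _ hφ, fun v => LinearMap.toMatrix' (a v),
      fun v => LinearMap.toMatrix' (b v), fun e => ?_⟩
    rw [← LinearMap.toMatrix'_toLin' (φ' e), hab, LinearMap.toMatrix'_comp,
      LinearMap.toMatrix'_comp, Matrix.mul_assoc]

theorem finCorepTypeOn [IsAlgClosed K] [Finite V] [Finite A]
    (hdisc : DiscreteCorepType K H) (hg : ∀ v, IsGrouplike K H (g v))
    (hx : ∀ e, x e ∈ skewPrim K H (g (s e)) (g (t e)))
    (hli : LinearIndependent K (Sum.elim g x)) :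
    FinCorepTypeOn K H (Submodule.span K (Set.range g ∪ Set.range x)) := by
  classical
  cases nonempty_fintype V
  cases nonempty_fintype A
  have hpos : (separatedTitsForm s t).PosDef := hdisc.separatedTitsForm_posDef hg hx hli
  have hfin : FiniteUpTo (comodSetoid K H) fun M => M.Indec K H ∧
      M.IsFiniteOver K H (Submodule.span K (Set.range g ∪ Set.range x)) := by
    refine FiniteUpTo.of_exists_mem
      (T := {d : V ⊕ V → ℕ | separatedTitsForm s t (fun w => (d w : ℤ)) ≤ 1})
      ((finite_setOf_quadraticForm_le hpos 1).preimage ?_)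
      (fun d _ => hdisc.finiteUpTo_indec_ofRep hg hx d) fun M ⟨hM, hMD⟩ => ?_
    · exact fun d _ d' _ h => funext fun w => Nat.cast_injective (congrFun h w)
    obtain ⟨d, φ, hMφ⟩ := Comod.exists_comodIso_ofRep hg hx hli hMD
    have hbrick := (Comod.isIndecomposable_of_indec_ofRep (hMφ.indec hM)).isBrick hpos
    have hdim : QuiverRep.dimVector K (fun w => Fin (d w) → K) = fun w => (d w : ℤ) :=
      funext fun w => congrArg _ (Module.finrank_fin_fun K)
    have hle : separatedTitsForm s t (fun w => (d w : ℤ)) ≤ 1 := hdim ▸ hbrick.titsForm_le_one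
    exact ⟨d, hle, hM, φ, hMφ⟩
  obtain ⟨N, R, hR⟩ := hfin.exists_fin
  exact ⟨N, R, fun M hM hMfin hMD => hR M ⟨hM, hMfin, hMD⟩⟩

end DiscreteCorepType

end CorepresentationType

theorem not_discrete_of_infinite_subcoalgebra_KQ1_general {K : Type} [Field K] [IsAlgClosed K]
    {H : Type} [AddCommGroup H] [Module K H] [Coalgebra K H] {V : Type} {A : Type*} [Fintype V]
    [Fintype A] {s t : A → V} {g : V → H} {x : A → H} (hg : ∀ v, IsGrouplike K H (g v))
    (hx : ∀ e, x e ∈ skewPrim K H (g (s e)) (g (t e)))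
    (hli : LinearIndependent K (Sum.elim g x)) :
    (¬ FinCorepTypeOn K H (Submodule.span K (Set.range g ∪ Set.range x)) →
      ¬ DiscreteCorepType K H) ∧
    ((∀ v, (∀ e, s e ≠ v) ∨ (∀ e, t e ≠ v)) →
      (∃ d : V → ℤ, d ≠ 0 ∧ ∑ v, (d v) ^ 2 ≤ ∑ e, d (s e) * d (t e)) →
      ¬ DiscreteCorepType K H) := by
  refine ⟨fun hinf hdisc => hinf (hdisc.finCorepTypeOn hg hx hli), ?_⟩
  rintro hst ⟨d, hd, hle⟩ hdisc
  have hpos : 0 < titsForm s t d :=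
    titsForm_posDef_of_bipartite hst (hdisc.separatedTitsForm_posDef hg hx hli) d hd
  rw [titsForm_apply] at hpos
  omega

theorem not_discrete_of_infinite_subcoalgebra_KQ1
    (K : Type) [Field K] [IsAlgClosed K]
    (H : Type) [Ring H] [HopfAlgebra K H] (hpointed : IsPointedCoalgebra K H) :
    -- a finite subquiver `Q'` of the Ext-quiver of `H` is given by finitely many distinct
    -- grouplike vertices `g v` and, for each arrow `e : s e → t e`, a skew primitive `x e`,
    -- such that the `g v` and `x e` are jointly linearly independent; the subcoalgebra
    -- `K Q'₁` is then their span.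
    (∀ (V A : Type) [Fintype V] [Fintype A] (s t : A → V) (g : V → H) (x : A → H),
        Function.Injective g → (∀ v, IsGrouplike K H (g v)) →
        (∀ e, x e ∈ skewPrim K H (g (s e)) (g (t e))) →
        LinearIndependent K (Sum.elim g x) →
        ¬ FinCorepTypeOn K H (Submodule.span K (Set.range g ∪ Set.range x)) →
        ¬ DiscreteCorepType K H) ∧
    -- in particular, if `Q'` is bipartite and its underlying graph is not a disjoint union
    -- of Dynkin diagrams (i.e. its Tits form is not positive definite), then `H` is not of
    -- discrete corepresentation type.
    (∀ (V A : Type) [Fintype V] [Fintype A] (s t : A → V) (g : V → H) (x : A → H),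
        Function.Injective g → (∀ v, IsGrouplike K H (g v)) →
        (∀ e, x e ∈ skewPrim K H (g (s e)) (g (t e))) →
        LinearIndependent K (Sum.elim g x) →
        (∀ v : V, (∀ e, s e ≠ v) ∨ (∀ e, t e ≠ v)) →
        (∃ d : V → ℤ, d ≠ 0 ∧ ∑ v, (d v) ^ 2 ≤ ∑ e, d (s e) * d (t e)) →
        ¬ DiscreteCorepType K H) :=
  ⟨fun _ _ _ _ _ _ _ _ _ hg hx hli =>
      (not_discrete_of_infinite_subcoalgebra_KQ1_general hg hx hli).1,
    fun _ _ _ _ _ _ _ _ _ hg hx hli =>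
      (not_discrete_of_infinite_subcoalgebra_KQ1_general hg hx hli).2⟩
end

section
/- Let H be a pointed Hopf algebra and Q the Ext-quiver of the category of right H-comodules. Then for any two grouplikes g, h of H, the star subquivers Star(g) and Star(h) are isomorphic as quivers. Consequently, Q is homogeneous: there exist cardinals n and p such that at every vertex of Q, exactly n arrows go out to other vertices, exactly n arrows come in from other vertices, and exactly p loops exist. -/
open TensorProduct



open scoped Classical

section Pointed

variable (K : Type) [CommRing K] (H : Type) [Ring H] [Bialgebra K H]

/-- `g` is a grouplike element belonging to the subcoalgebra `B`. -/
def grouplikeIn (B : Submodule K H) (g : H) : Prop := IsGrouplike K H g ∧ g ∈ B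

/-- In the Ext-quiver of the subcoalgebra `B`, there are exactly `c` arrows from the
grouplike `g` to the grouplike `h` : since the trivial skew primitive `g - h` is nonzero
precisely when `g ≠ h`, this says `dim (P(g,h) ⊓ B) = c + 1` for `g ≠ h`, and
`dim (P(g,g) ⊓ B) = c` for loops. -/
def arrowsEq (B : Submodule K H) (g h : H) (c : ℕ) : Prop :=
  Module.rank K ↥(skewPrim K H g h ⊓ B) = if g = h then (c : Cardinal) else (c : Cardinal) + 1

/-- The number of arrows from `g` to `h` in the Ext-quiver, as a cardinal: the dimension of
the space of skew primitives modulo the trivial ones. -/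
noncomputable def ntRank (g h : H) : Cardinal :=
  Module.rank K
    (↥(skewPrim K H g h) ⧸
      Submodule.comap (skewPrim K H g h).subtype (Submodule.span K {g - h}))

/-- Two grouplikes are linked in `D` if there is a nontrivial skew primitive (in either
direction) between them lying in `D`. -/
def LinkedIn (D : Submodule K H) (g h : H) : Prop :=
  ∃ x ∈ D, (x ∈ skewPrim K H g h ∨ x ∈ skewPrim K H h g) ∧ x ∉ Submodule.span K {g - h}

/-- The Ext-quiver of the subcoalgebra `D` is connected. -/
def ConnectedOn (D : Submodule K H) : Prop :=
  ∀ g h : H, IsGrouplike K H g → g ∈ D → IsGrouplike K H h → h ∈ D →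
    Relation.ReflTransGen (LinkedIn K H D) g h

/-- `B` is the link-indecomposable component containing `1` : a subcoalgebra containing `1`,
maximal with respect to its Ext-quiver being connected. -/
structure IsLIC1 (B : Submodule K H) : Prop where
  subcoalg : IsSubcoalgebra K H B
  one_mem : (1 : H) ∈ B
  connected : ConnectedOn K H B
  maximal : ∀ B' : Submodule K H, IsSubcoalgebra K H B' → ConnectedOn K H B' →
    B ≤ B' → B' = B

end Pointed

/-- `a^i * a'^(-i)`, i.e. the `i`-th power (for `i : ℤ`) of `a` when `a'` is a two-sided
inverse of `a`. -/
def zp {B : Type} [Monoid B] (a a' : B) (i : ℤ) : B := a ^ i.toNat * a' ^ (-i).toNat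

section Hopf

variable (K : Type) [CommRing K] (H : Type) [Ring H] [HopfAlgebra K H]

/-- The antipode applied to an element; for a grouplike `g` this is its inverse `g⁻¹`. -/
noncomputable def inv' (g : H) : H := HopfAlgebra.antipode (R := K) g

/-- The Ext-quiver of the subcoalgebra `B` is the (possibly folded) grid quiver `Q^{m,n}` :
the grouplikes of `B` form the group `⟨a, b | ab = ba, aᵐ = bⁿ⟩`, and at each vertex `g`
there is exactly one arrow `g → g·a` and one arrow `g → g·b`, and no other arrows. -/
def GridQuiverOn (B : Submodule K H) (a b : H) (m n : ℤ) : Prop :=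
  grouplikeIn K H B a ∧ grouplikeIn K H B b ∧ a * b = b * a ∧
  a * inv' K H a = 1 ∧ inv' K H a * a = 1 ∧ b * inv' K H b = 1 ∧ inv' K H b * b = 1 ∧
  (∀ i j : ℤ, zp a (inv' K H a) i * zp b (inv' K H b) j = 1 ↔
      ∃ l : ℤ, i = l * m ∧ j = -(l * n)) ∧
  (∀ g : H, grouplikeIn K H B g ↔
      ∃ i j : ℤ, g = zp a (inv' K H a) i * zp b (inv' K H b) j) ∧
  (∀ g h : H, grouplikeIn K H B g → grouplikeIn K H B h →
      arrowsEq K H B g h (if h = g * a ∨ h = g * b then 1 else 0))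

/-- The Ext-quiver of `B` is a single vertex, and `G(B) = {1}`. -/
def SingleVertexQuiver (B : Submodule K H) : Prop :=
  (∀ g : H, grouplikeIn K H B g ↔ g = 1) ∧ arrowsEq K H B 1 1 0

/-- The Ext-quiver of `B` is a complete oriented cycle, and `G(B) = ⟨a | aⁿ = 1⟩`. -/
def CycleQuiver (B : Submodule K H) : Prop :=
  ∃ (a : H) (nn : ℕ), 0 < nn ∧ grouplikeIn K H B a ∧ a ^ nn = 1 ∧
    (∀ kk : ℕ, 0 < kk → kk < nn → a ^ kk ≠ 1) ∧
    (∀ g : H, grouplikeIn K H B g ↔ ∃ i : ℕ, g = a ^ i) ∧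
    (∀ g h : H, grouplikeIn K H B g → grouplikeIn K H B h →
      arrowsEq K H B g h (if h = g * a then 1 else 0))

/-- The Ext-quiver of `B` is the doubly infinite linear quiver `··· → · → · → ···`, and
`G(B) = ⟨a⟩` is infinite cyclic. -/
def LineQuiver (B : Submodule K H) : Prop :=
  ∃ a : H, grouplikeIn K H B a ∧ (∀ kk : ℕ, 0 < kk → a ^ kk ≠ 1) ∧
    (∀ g : H, grouplikeIn K H B g ↔ ∃ i j : ℕ, a ^ i * g = a ^ j) ∧
    (∀ g h : H, grouplikeIn K H B g → grouplikeIn K H B h →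
      arrowsEq K H B g h (if h = g * a then 1 else 0))

end Hopf

/-!
Left multiplication by a grouplike `a` is a coalgebra automorphism of `H`, so it carries `P(g,h)`
onto `P(ag,ah)` and `g - h` to `ag - ah`. Hence the number of arrows `w(g,h)` is a left-invariant
function on the group of grouplikes: translation by `hg⁻¹` identifies `Star(g)` with `Star(h)`.
There are as many arrows into `1` as out of it, because `w(u,1) = w(1,u⁻¹)`.
-/

section LeftInvariant

universe u v

lemma cardinalSum_comp_equiv {ι κ : Type u} (e : ι ≃ κ) (f : κ → Cardinal.{v}) :
    Cardinal.sum (fun i => f (e i)) = Cardinal.sum f :=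
  Cardinal.mk_congr (Equiv.sigmaCongrLeft (β := fun k => (f k).out) e)

variable {G : Type u} [Group G] {w : G → G → Cardinal.{v}}

lemma sum_out_eq_sum_out_one (hw : ∀ a g h, w (a * g) (a * h) = w g h) (g : G) :
    Cardinal.sum (fun u : {u : G // u ≠ g} => w g u) =
      Cardinal.sum (fun u : {u : G // u ≠ 1} => w 1 u) := by
  let e : {u : G // u ≠ g} ≃ {u : G // u ≠ 1} :=
    (Equiv.mulLeft g⁻¹).subtypeEquiv fun u => by simp [inv_mul_eq_one, eq_comm]
  have he (u : {u : G // u ≠ g}) : w 1 (e u) = w g u := by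
    simpa [e] using hw g⁻¹ g u
  simpa only [he] using cardinalSum_comp_equiv e fun u => w 1 u

lemma sum_in_eq_sum_out_one (hw : ∀ a g h, w (a * g) (a * h) = w g h) (g : G) :
    Cardinal.sum (fun u : {u : G // u ≠ g} => w u g) =
      Cardinal.sum (fun u : {u : G // u ≠ 1} => w 1 u) := by
  let e : {u : G // u ≠ g} ≃ {u : G // u ≠ 1} :=
    ((Equiv.inv G).trans (Equiv.mulRight g)).subtypeEquiv fun u => by simp [inv_mul_eq_one]
  have he (u : {u : G // u ≠ g}) : w 1 (e u) = w u g := by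
    simpa [e] using hw (u : G)⁻¹ u g
  simpa only [he] using cardinalSum_comp_equiv e fun u => w 1 u

end LeftInvariant

section Coalgebra

variable {K : Type} [CommRing K] {C D : Type} [AddCommGroup C] [Module K C] [Coalgebra K C]
  [AddCommGroup D] [Module K D] [Coalgebra K D]

lemma isGrouplike_iff_isGroupLikeElem {g : C} : IsGrouplike K C g ↔ IsGroupLikeElem K g :=
  (isGroupLikeElem_iff K g).symm

instance : CanLift C (GroupLike K C) GroupLike.val (IsGrouplike K C) where
  prf g hg := ⟨⟨g, isGrouplike_iff_isGroupLikeElem.1 hg⟩, rfl⟩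

/-- The vertices of the Ext-quiver other than `g`, as bundled grouplikes. -/
def otherVerticesEquiv (g : GroupLike K C) :
    {u : GroupLike K C // u ≠ g} ≃ {u : C // IsGrouplike K C u ∧ u ≠ g} where
  toFun u := ⟨u.1, isGrouplike_iff_isGroupLikeElem.2 u.1.2, fun h => u.2 (GroupLike.ext h)⟩
  invFun u := ⟨⟨u.1, isGrouplike_iff_isGroupLikeElem.1 u.2.1⟩,
    fun h => u.2.2 (congrArg GroupLike.val h)⟩
  left_inv _ := rfl
  right_inv _ := rfl

lemma map_mem_skewPrim (f : C →ₗc[K] D) {g h x : C} (hx : x ∈ skewPrim K C g h) :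
    f x ∈ skewPrim K D (f g) (f h) := by
  rw [mem_skewPrim] at hx ⊢
  rw [← CoalgHomClass.map_comp_comul_apply, hx]
  simp

lemma map_skewPrim (e : C ≃ₗc[K] D) (g h : C) :
    (skewPrim K C g h).map (e : C →ₗ[K] D) = skewPrim K D (e g) (e h) := by
  ext y
  rw [Submodule.mem_map_equiv]
  exact ⟨fun hy => by simpa using map_mem_skewPrim (e : C →ₗc[K] D) hy,
    fun hy => by simpa using map_mem_skewPrim (e.symm : D →ₗc[K] C) hy⟩

/-- The isomorphism between spaces of skew primitives induced by a coalgebra isomorphism. -/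
noncomputable def skewPrimEquiv (e : C ≃ₗc[K] D) (g h : C) :
    skewPrim K C g h ≃ₗ[K] skewPrim K D (e g) (e h) :=
  (e : C ≃ₗ[K] D).ofSubmodules _ _ (map_skewPrim e g h)

end Coalgebra

section Bialgebra

variable {K : Type} [CommRing K] {H H' : Type} [Ring H] [Bialgebra K H] [Ring H'] [Bialgebra K H']

lemma ntRank_map (e : H ≃ₗc[K] H') (g h : H) : ntRank K H' (e g) (e h) = ntRank K H g h := by
  refine (Submodule.Quotient.equiv _ _ (skewPrimEquiv e g h) ?_).rank_eq.symm
  have map_span : (Submodule.span K {g - h}).map (e : H →ₗ[K] H') =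
      Submodule.span K {e g - e h} := by
    simp [Submodule.map_span]
  ext y
  rw [Submodule.mem_map_equiv, ← map_span, Submodule.mem_comap, Submodule.mem_comap,
    Submodule.mem_map_equiv]
  rfl

/-- Left multiplication by an invertible grouplike, as a coalgebra automorphism. -/
def IsGrouplike.mulLeftCoalgEquiv {a : Hˣ} (ha : IsGrouplike K H a) : H ≃ₗc[K] H where
  __ := a.mulLeftLinearEquiv K H
  counit_comp := by
    ext x
    simp [ha.1]
  map_comp_comul := by
    ext x
    change TensorProduct.map (LinearMap.mulLeft K (a : H)) (LinearMap.mulLeft K (a : H))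
      (Coalgebra.comul x) = Coalgebra.comul (a * x)
    rw [← LinearMap.mulLeft_tmul, LinearMap.mulLeft_apply, Bialgebra.comul_mul, ha.2]

end Bialgebra

section HopfAlgebra

variable {K : Type} [CommRing K] {H : Type} [Ring H] [HopfAlgebra K H]

/-- Left translation by a grouplike of a Hopf algebra, as a coalgebra automorphism. -/
def leftTranslation (a : GroupLike K H) : H ≃ₗc[K] H :=
  IsGrouplike.mulLeftCoalgEquiv (a := GroupLike.toUnits K a)
    (isGrouplike_iff_isGroupLikeElem.2 a.isGroupLikeElem_val)

lemma rank_skewPrim_mul_left (a : GroupLike K H) (g h : H) :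
    Module.rank K (skewPrim K H (a * g) (a * h)) = Module.rank K (skewPrim K H g h) :=
  (skewPrimEquiv (leftTranslation a) g h).rank_eq.symm

lemma ntRank_mul_left (a : GroupLike K H) (g h : H) :
    ntRank K H (a * g) (a * h) = ntRank K H g h :=
  ntRank_map (leftTranslation a) g h

end HopfAlgebra

theorem star_quivers_isomorphic_and_homogeneous_general
    (K : Type) [CommRing K]
    (H : Type) [Ring H] [HopfAlgebra K H] :
    (∀ g h u : H, IsGrouplike K H g → IsGrouplike K H h → IsGrouplike K H u →
      Module.rank K ↥(skewPrim K H g u) =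
        Module.rank K ↥(skewPrim K H h (h * inv' K H g * u)) ∧
      Module.rank K ↥(skewPrim K H u g) =
        Module.rank K ↥(skewPrim K H (h * inv' K H g * u) h)) ∧
    (∃ n p : Cardinal, ∀ g : H, IsGrouplike K H g →
      Cardinal.sum
        (fun u : {u : H // IsGrouplike K H u ∧ u ≠ g} => ntRank K H g u.1) = n ∧
      Cardinal.sum
        (fun u : {u : H // IsGrouplike K H u ∧ u ≠ g} => ntRank K H u.1 g) = n ∧
      ntRank K H g g = p) := by
  constructor
  · intro g h u hg hh _
    lift g to GroupLike K H using hg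
    lift h to GroupLike K H using hh
    have translate_g : ↑(h * g⁻¹) * g = (h : H) :=
      congrArg GroupLike.val (inv_mul_cancel_right h g)
    constructor
    · rw [← rank_skewPrim_mul_left (h * g⁻¹) g u, translate_g]
      rfl
    · rw [← rank_skewPrim_mul_left (h * g⁻¹) u g, translate_g]
      rfl
  · let w (g h : GroupLike K H) : Cardinal := ntRank K H g h
    have w_mul_left (a g h) : w (a * g) (a * h) = w g h := ntRank_mul_left a g h
    refine ⟨Cardinal.sum fun u : {u : GroupLike K H // u ≠ 1} => w 1 u, w 1 1, fun g hg => ?_⟩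
    lift g to GroupLike K H using hg
    refine ⟨?_, ?_, ?_⟩
    · rw [← cardinalSum_comp_equiv (otherVerticesEquiv g)]
      exact sum_out_eq_sum_out_one w_mul_left g
    · rw [← cardinalSum_comp_equiv (otherVerticesEquiv g)]
      exact sum_in_eq_sum_out_one w_mul_left g
    · simpa using w_mul_left g 1 1

theorem star_quivers_isomorphic_and_homogeneous
    (K : Type) [Field K]
    (H : Type) [Ring H] [HopfAlgebra K H] (hpointed : IsPointedCoalgebra K H) :
    -- `Star(g) ≅ Star(h)` : translation by `h g⁻¹` matches the arrows at `g` with those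
    -- at `h`
    (∀ g h u : H, IsGrouplike K H g → IsGrouplike K H h → IsGrouplike K H u →
      Module.rank K ↥(skewPrim K H g u) =
        Module.rank K ↥(skewPrim K H h (h * inv' K H g * u)) ∧
      Module.rank K ↥(skewPrim K H u g) =
        Module.rank K ↥(skewPrim K H (h * inv' K H g * u) h)) ∧
    -- consequently the Ext-quiver is homogeneous
    (∃ n p : Cardinal, ∀ g : H, IsGrouplike K H g →
      Cardinal.sum
        (fun u : {u : H // IsGrouplike K H u ∧ u ≠ g} => ntRank K H g u.1) = n ∧
      Cardinal.sum
        (fun u : {u : H // IsGrouplike K H u ∧ u ≠ g} => ntRank K H u.1 g) = n ∧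
      ntRank K H g g = p) :=
  star_quivers_isomorphic_and_homogeneous_general K H
end
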